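/- arXiv:1610.02676 — 2 statements merged into one kernel-verified Lean document; each statement's English description precedes it below -/
import Mathlib

section
/- There exist absolute constants δ₀ > 0 and c > 0 such that for every even integer s ≥ 400, setting p = 2^{-s}, there exists a bipartite graph G of density p with the following property: for every graph G' on V(G) with |E(G) △ E(G')| ≤ δ₀|E(G)| and every p⁵-regular partition Z of V(G') (not necessarily equitable), the number of parts of Z is at least twr(c·log₂(1/p)). -/
/-!
The graph hides a tower-type hierarchy of partitions. A vertex carries visible coordinates
`a 0, …, a t`, where `a (l + 1)` ranges over a set exponentially larger than `a l`: its values name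
the words of a code of length `codeSize l` over an abelian group with 256 elements. Adjacency (`Linked`)
asks that, at every level, masks carried by the two endpoints add up to the letter of the word
`a (l + 1)` of one endpoint at the position `a l` of the other. Thus a neighbour of `x` is determined
by its visible coordinates, which are arbitrary, and the density is `2 ^ (-s)` once `16 t < s`, with
an inert coordinate taking up the slack. By a Gilbert–Varshamov argument (`exists_code`) the codes can
be chosen so that the difference of two words takes each value on at most a quarter of the positions.
Consequently (`separation`) two vertices on the same side differing in `a 1, …, a (i + 1)` share at
most a quarter of their neighbours, even when neighbours are only compared through `a 1, …, a i` and
the coordinates of bounded range.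

Let `P` be a regular partition of a modification `G'`. A vertex is good at level `i` if its values
`a 1, …, a i` are shared by an eighth of the vertices in its part and on its side. All vertices are good
at level `0`. Suppose that `x` is good at level `i` but not at level `i + 1`, and consider its neighbours
`y` good at level `i`. The good vertices of a part fall into a bounded number of blocks according to
`a 1, …, a i` and the coordinates of bounded range. A typical vertex of the part of `x` differs from
`x` in `a 1, …, a (i + 1)`, so it sees none of the blocks of most neighbours `y` of `x` (`gain`);
regularity then forces the edges from `x` to such blocks to have been modified (`block`). Summing over
everything (`upper_bound`), the number of edges at bad vertices is controlled by the number of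
modifications, because every edge at a bad vertex can be charged from the endpoint that fails first
(`lower_bound`) and each vertex fails only once. Hence most vertices are good at level `t`
(`parts_bound`), and since the good vertices of a part take at most sixteen values of
`a 1, …, a t`, the number of parts is at least `codeSize t / 32`, which is a tower of height `t`.
-/

open Finset
open scoped Classical

/-- `eCnt G A B` is the number of ordered pairs `(u,v) ∈ A × B` with `uv` an edge of `G`. -/
noncomputable def eCnt {V : Type*} [Fintype V] (G : SimpleGraph V) (A B : Finset V) : ℕ :=
  ((A ×ˢ B).filter fun p => G.Adj p.1 p.2).card

/-- The edge density `d_G(A,B)` between vertex subsets `A` and `B`. -/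
noncomputable def dens {V : Type*} [Fintype V] (G : SimpleGraph V) (A B : Finset V) : ℝ :=
  eCnt G A B / (A.card * B.card)

/-- The pair `(A,B)` is `ε`-regular. -/
def RegPair {V : Type*} [Fintype V] (G : SimpleGraph V) (ε : ℝ) (A B : Finset V) : Prop :=
  ∀ A' ⊆ A, ∀ B' ⊆ B, ε * A.card ≤ A'.card → ε * B.card ≤ B'.card →
    |dens G A B - dens G A' B'| ≤ ε

/-- The density `d_G = 2|E|/|V|²` of a graph. -/
noncomputable def graphDensity {V : Type*} [Fintype V] (G : SimpleGraph V) : ℝ :=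
  2 * G.edgeSet.ncard / (Fintype.card V : ℝ) ^ 2

/-- A (not necessarily equitable) vertex partition `P` is `ε`-regular if the sum of
`|Z||Z'|` over ordered pairs of parts `(Z,Z')` that are not `ε`-regular is at most `ε n²`. -/
def IsRegularPartitionW {V : Type*} [Fintype V] [DecidableEq V] (G : SimpleGraph V)
    (ε : ℝ) (P : Finpartition (univ : Finset V)) : Prop :=
  ∑ pq ∈ (P.parts ×ˢ P.parts).filter (fun pq => ¬ RegPair G ε pq.1 pq.2),
      ((pq.1.card : ℝ) * pq.2.card) ≤ ε * (Fintype.card V : ℝ) ^ 2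

/-- `twr x` is a tower of twos of height `x`. -/
def twr : ℕ → ℕ
  | 0 => 1
  | n + 1 => 2 ^ twr n

set_option linter.unusedSectionVars false

/-! ### Codes -/

section Code

variable {F : Type*} [AddCommGroup F] [Fintype F]

/-- Fixing at least `n / 4` of the coordinates of a word over an alphabet of size `2 ^ 8` leaves
at most `2 ^ (6 n)` words. -/
lemma agree_card (hF : Fintype.card F = 256) {n : ℕ} (f : Fin n → F) (k : F) (S : Finset (Fin n))
    (hS : n ≤ 4 * S.card) :
    (univ.filter fun g : Fin n → F => ∀ u ∈ S, g u = f u + k).card ≤ 2 ^ (6 * n) := by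
  have h : (univ.filter fun g : Fin n → F => ∀ u ∈ S, g u = f u + k) =
      Fintype.piFinset (fun u => if u ∈ S then {f u + k} else univ) := by
    ext g
    simp only [mem_filter, mem_univ, true_and, Fintype.mem_piFinset]
    refine forall_congr' fun u => ?_
    by_cases hu : u ∈ S <;> simp [hu]
  rw [h, Fintype.card_piFinset]
  have h2 : ∀ u : Fin n, (if u ∈ S then ({f u + k} : Finset (F)) else univ).card =
      if u ∈ S then 1 else 2 ^ 8 := by
    intro u
    split_ifs
    · simp
    · rw [Finset.card_univ, hF]; norm_num
  rw [Finset.prod_congr rfl fun u _ => h2 u, Finset.prod_ite]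
  simp only [prod_const_one, one_mul, prod_const]
  rw [← pow_mul]
  apply Nat.pow_le_pow_right (by norm_num)
  have h3 : (univ.filter fun u => u ∉ S) = Sᶜ := by ext; simp
  rw [h3, Finset.card_compl, Fintype.card_fin]
  omega

/-- Two words are close if their difference takes some constant value on more than a quarter of
the coordinates. The constant is allowed to be nonzero, so this is coarser than agreement: the code
must separate words up to translation by a constant. -/
def Close {n : ℕ} (f g : Fin n → F) : Prop :=
  ∃ k, n < 4 * (univ.filter fun u => g u - f u = k).card

lemma Close.symm {n : ℕ} {f g : Fin n → F} (h : Close f g) : Close g f := by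
  obtain ⟨k, hk⟩ := h
  refine ⟨-k, hk.trans_eq ?_⟩
  congr 2
  ext u
  simp only [mem_filter, mem_univ, true_and]
  rw [← neg_sub, neg_eq_iff_eq_neg]

/-- The ball of words close to `f` has size at most `|F| · 2 ^ n · 2 ^ (6 n)`: choose the constant,
the set of coordinates where it occurs, and the remaining values. -/
lemma close_card (hF : Fintype.card F = 256) {n : ℕ} (f : Fin n → F) :
    (univ.filter fun g => Close f g).card ≤ 2 ^ (7 * n + 8) := by
  have hsub : (univ.filter fun g => Close f g) ⊆
      ((univ : Finset (F)) ×ˢ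
        ((univ : Finset (Finset (Fin n))).filter fun S => n ≤ 4 * S.card)).biUnion
      (fun q => univ.filter fun g : Fin n → F => ∀ u ∈ q.2, g u = f u + q.1) := by
    intro g hg
    obtain ⟨k, hk⟩ := (mem_filter.1 hg).2
    refine mem_biUnion.2 ⟨(k, univ.filter fun u => g u - f u = k), ?_, ?_⟩
    · simp only [mem_product, mem_univ, mem_filter, true_and]
      exact hk.le
    · simp only [mem_filter, mem_univ, true_and]
      intro u hu
      rw [← hu]; abel
  refine (card_le_card hsub).trans ((card_biUnion_le_card_mul _ _ (2 ^ (6 * n)) ?_).trans ?_)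
  · rintro ⟨k, S⟩ hq
    simp only [mem_product, mem_univ, mem_filter, true_and] at hq
    exact agree_card hF f k S hq
  · rw [card_product]
    have h1 : ((univ : Finset (Finset (Fin n))).filter fun S => n ≤ 4 * S.card).card ≤ 2 ^ n := by
      refine (card_le_univ _).trans ?_
      rw [Fintype.card_finset, Fintype.card_fin]
    have h2 : (univ : Finset (F)).card = 2 ^ 8 := by
      rw [Finset.card_univ, hF]; norm_num
    rw [h2]
    calc 2 ^ 8 * _ * 2 ^ (6 * n) ≤ 2 ^ 8 * 2 ^ n * 2 ^ (6 * n) := by gcongr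
      _ = 2 ^ (7 * n + 8) := by rw [← pow_add, ← pow_add]; congr 1; ring

/-- Greedy (Gilbert–Varshamov) choice of pairwise far words: as `|F ^ n| = 2 ^ (8 n)`, the balls
around fewer than `2 ^ (n - 8)` words do not cover the space. -/
lemma exists_far (hF : Fintype.card F = 256) {n : ℕ} (hn : 8 ≤ n) (m : ℕ) (hm : m ≤ 2 ^ (n - 8)) :
    ∃ C : Finset (Fin n → F), C.card = m ∧
      ∀ f ∈ C, ∀ g ∈ C, f ≠ g → ¬ Close f g := by
  induction m with
  | zero => exact ⟨∅, by simp, by simp⟩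
  | succ m ih =>
    obtain ⟨C, hC, hfar⟩ := ih (by omega)
    -- the balls around the words of `C` do not cover the space
    have hlt : (C.biUnion fun f => univ.filter fun g => Close f g).card
        < (univ : Finset (Fin n → F)).card := by
      calc _ ≤ C.card * 2 ^ (7 * n + 8) := card_biUnion_le_card_mul _ _ _ fun f _ => close_card hF f
        _ < 2 ^ (n - 8) * 2 ^ (7 * n + 8) := by
            rw [hC]
            exact Nat.mul_lt_mul_of_pos_right (by omega) (by positivity)
        _ = 2 ^ (8 * n) := by rw [← pow_add]; congr 1; omega
        _ = _ := by
            rw [Finset.card_univ, Fintype.card_fun, hF, Fintype.card_fin, pow_mul]; norm_num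
    obtain ⟨g, -, hg⟩ := exists_mem_notMem_of_card_lt_card hlt
    have hg' : ∀ f ∈ C, ¬ Close f g := fun f hf hc =>
      hg (mem_biUnion.2 ⟨f, hf, by simpa using hc⟩)
    have hgC : g ∉ C := by
      intro hgC
      refine hg' g hgC ⟨0, ?_⟩
      simp only [sub_self, filter_true, card_univ, Fintype.card_fin]
      omega
    refine ⟨insert g C, by rw [card_insert_of_notMem hgC, hC], ?_⟩
    intro f hf f' hf' hne
    rcases mem_insert.1 hf with h1 | h1 <;> rcases mem_insert.1 hf' with h2 | h2
    · exact absurd (h1.trans h2.symm) hne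
    · exact fun h => hg' _ h2 (h1 ▸ h.symm)
    · exact fun h => hg' _ h1 (h2 ▸ h)
    · exact hfar f h1 f' h2 hne

/-- A code of size `2 ^ (n - 8)` in which the difference of two distinct words takes each value on
at most a quarter of the coordinates. -/
lemma exists_code (hF : Fintype.card F = 256) {n : ℕ} (hn : 8 ≤ n) :
    ∃ ev : Fin (2 ^ (n - 8)) → Fin n → F, ∀ a a', a ≠ a' → ∀ k,
      4 * (univ.filter fun u => ev a u - ev a' u = k).card ≤ n := by
  obtain ⟨C, hC, hfar⟩ := exists_far hF hn _ le_rfl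
  let e := (Fintype.equivFinOfCardEq (α := C) (by simpa using hC)).symm
  refine ⟨fun a => (e a).1, fun a a' hne k => ?_⟩
  by_contra hlt
  push Not at hlt
  refine hfar (e a').1 (e a').2 (e a).1 (e a).2 ?_ ⟨k, hlt⟩
  intro h
  exact hne (e.injective (Subtype.ext h.symm))

/-- Number of values of the `i`-th visible coordinate of a vertex. Each value of the coordinate
`i + 1` names a word of length `codeSize i`, so the sizes grow like a tower. -/
def codeSize : ℕ → ℕ
  | 0 => 20
  | i + 1 => 2 ^ (codeSize i - 8)

lemma codeSize_ge (i : ℕ) : twr i + 16 ≤ codeSize i := by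
  induction i with
  | zero => simp [twr, codeSize]
  | succ i ih =>
    have h1 : 2 ^ (twr i + 8) ≤ 2 ^ (codeSize i - 8) := Nat.pow_le_pow_right (by norm_num) (by omega)
    have h2 : 1 ≤ 2 ^ twr i := Nat.one_le_two_pow
    rw [pow_add] at h1
    simp only [twr, codeSize]
    omega

lemma codeSize_succ_ge (i : ℕ) : 32 * twr (i + 1) ≤ codeSize (i + 1) := by
  have h0 := codeSize_ge i
  have h1 : 2 ^ (twr i + 8) ≤ 2 ^ (codeSize i - 8) := Nat.pow_le_pow_right (by norm_num) (by omega)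
  rw [pow_add] at h1
  simp only [twr, codeSize]
  omega

end Code

/-! ### Consequences of regularity for a block -/

section Main

variable {V κ η : Type*} [Fintype V] [DecidableEq V]

/-- The adjacency indicator as a real number. -/
noncomputable def adjR (G : SimpleGraph V) (x y : V) : ℝ := if G.Adj x y then 1 else 0

/-- Indicator that `G` and `G'` differ at the ordered pair `(x, y)`. -/
noncomputable def dif (G G' : SimpleGraph V) (x y : V) : ℝ := |adjR G x y - adjR G' x y|

lemma adjR_nonneg (G : SimpleGraph V) (x y : V) : 0 ≤ adjR G x y := by
  unfold adjR; split_ifs <;> norm_num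

lemma adjR_le_one (G : SimpleGraph V) (x y : V) : adjR G x y ≤ 1 := by
  unfold adjR; split_ifs <;> norm_num

lemma dif_nonneg (G G' : SimpleGraph V) (x y : V) : 0 ≤ dif G G' x y := abs_nonneg _

lemma eCnt_eq (G : SimpleGraph V) (A B : Finset V) :
    (eCnt G A B : ℝ) = ∑ x ∈ A, ∑ y ∈ B, adjR G x y := by
  unfold eCnt adjR
  rw [← Finset.sum_product' A B (fun x y => if G.Adj x y then (1 : ℝ) else 0)]
  simp

lemma sum_adjR_le (G : SimpleGraph V) (A B : Finset V) :
    ∑ x ∈ A, ∑ y ∈ B, adjR G x y ≤ (A.card : ℝ) * B.card := by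
  calc ∑ x ∈ A, ∑ y ∈ B, adjR G x y ≤ ∑ x ∈ A, ∑ y ∈ B, (1 : ℝ) :=
        Finset.sum_le_sum fun x _ => Finset.sum_le_sum fun y _ => adjR_le_one G x y
    _ = _ := by simp

lemma sum_adjR_eq_dens (G : SimpleGraph V) (A B : Finset V) :
    ∑ x ∈ A, ∑ y ∈ B, adjR G x y = dens G A B * (A.card * B.card) := by
  rw [← eCnt_eq]
  unfold _root_.dens
  rcases eq_or_ne ((A.card : ℝ) * B.card) 0 with h | h
  · rw [h, mul_zero, eCnt_eq]
    refine le_antisymm ((sum_adjR_le _ _ _).trans h.le) ?_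
    exact Finset.sum_nonneg fun x _ => Finset.sum_nonneg fun y _ => adjR_nonneg _ _ _
  · rw [div_mul_cancel₀ _ h]

/-- The only use of regularity. `U` and `Q` are subsets of `A ⊆ Z₀`, and `T ⊆ W₀`, where
`(Z₀, W₀)` is a pair of parts. If `Q` sees no `G`-edge to `T`, then regularity of `G'` forces the
`G`-edges between `U` and `T` to be paid for by modifications, in proportion to `|Q| / |A|`, up to
`ε`-errors for small sets and for slack, and the full size of the block if the pair is irregular. -/
lemma block {G G' : SimpleGraph V} {ε : ℝ} (hε : 0 ≤ ε) {A U Q T Z₀ W₀ : Finset V}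
    (hU : U ⊆ A) (hQ : Q ⊆ A) (hA : A ⊆ Z₀) (hT : T ⊆ W₀)
    (hQT : ∀ x ∈ Q, ∀ y ∈ T, ¬ G.Adj x y) :
    (Q.card / A.card : ℝ) * ∑ x ∈ U, ∑ y ∈ T, adjR G x y ≤
      ∑ x ∈ U, ∑ y ∈ T, dif G G' x y + (U.card / A.card : ℝ) * ∑ x ∈ A, ∑ y ∈ T, dif G G' x y
      + 2 * ε * (U.card * T.card) + ε * (Z₀.card * T.card) + ε * (U.card * W₀.card)
      + (if RegPair G' ε Z₀ W₀ then 0 else 1) * (U.card * T.card) := by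
  have hUA : (U.card : ℝ) ≤ A.card := by exact_mod_cast Finset.card_le_card hU
  have hQA : (Q.card : ℝ) ≤ A.card := by exact_mod_cast Finset.card_le_card hQ
  have hD1 : 0 ≤ ∑ x ∈ U, ∑ y ∈ T, dif G G' x y :=
    Finset.sum_nonneg fun x _ => Finset.sum_nonneg fun y _ => dif_nonneg _ _ _ _
  have hD2 : 0 ≤ ∑ x ∈ A, ∑ y ∈ T, dif G G' x y :=
    Finset.sum_nonneg fun x _ => Finset.sum_nonneg fun y _ => dif_nonneg _ _ _ _
  have hE := sum_adjR_le G U T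
  have hE0 : 0 ≤ ∑ x ∈ U, ∑ y ∈ T, adjR G x y :=
    Finset.sum_nonneg fun x _ => Finset.sum_nonneg fun y _ => adjR_nonneg _ _ _
  rcases Nat.eq_zero_or_pos A.card with h0 | hpos
  · rw [h0]
    simp only [Nat.cast_zero, div_zero, zero_mul]
    split_ifs <;> positivity
  have hApos : (0 : ℝ) < A.card := by exact_mod_cast hpos
  have hq1 : (Q.card / A.card : ℝ) ≤ 1 := (div_le_one hApos).2 hQA
  have hq0 : (0 : ℝ) ≤ Q.card / A.card := by positivity
  have hu1 : (U.card / A.card : ℝ) ≤ 1 := (div_le_one hApos).2 hUA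
  have hlhs : (Q.card / A.card : ℝ) * ∑ x ∈ U, ∑ y ∈ T, adjR G x y ≤
      (Q.card / A.card : ℝ) * (U.card * T.card) := mul_le_mul_of_nonneg_left hE hq0
  have hlhs' : (Q.card / A.card : ℝ) * (U.card * T.card) ≤ U.card * T.card :=
    mul_le_of_le_one_left (by positivity) hq1
  have hd2 : 0 ≤ (U.card / A.card : ℝ) * ∑ x ∈ A, ∑ y ∈ T, dif G G' x y := by positivity
  have t1 : 0 ≤ 2 * ε * ((U.card : ℝ) * T.card) := by positivity
  have t2 : 0 ≤ ε * ((Z₀.card : ℝ) * T.card) := by positivity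
  have t3 : 0 ≤ ε * ((U.card : ℝ) * W₀.card) := by positivity
  split_ifs with hreg
  swap
  · linarith
  rw [zero_mul, add_zero]
  by_cases hUs : ε * Z₀.card ≤ U.card
  swap
  · push Not at hUs
    have : (U.card : ℝ) * T.card ≤ ε * Z₀.card * T.card := by gcongr
    linarith
  by_cases hQs : ε * Z₀.card ≤ Q.card
  swap
  · push Not at hQs
    have h1 : (Q.card / A.card : ℝ) * (U.card * T.card) = (U.card / A.card : ℝ) * (Q.card * T.card) := by
      ring
    have h2 : (U.card / A.card : ℝ) * (Q.card * T.card) ≤ Q.card * T.card :=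
      mul_le_of_le_one_left (by positivity) hu1
    have : (Q.card : ℝ) * T.card ≤ ε * Z₀.card * T.card := by gcongr
    linarith
  by_cases hTs : ε * W₀.card ≤ T.card
  swap
  · push Not at hTs
    have : (U.card : ℝ) * T.card ≤ U.card * (ε * W₀.card) := by gcongr
    linarith
  -- the regular case with all three sets large
  have r1 := hreg U (hU.trans hA) T hT hUs hTs
  have r2 := hreg Q (hQ.trans hA) T hT hQs hTs
  have hdens : dens G' U T ≤ dens G' Q T + 2 * ε := by
    have := abs_le.1 r1; have := abs_le.1 r2; linarith
  have hu0 := sum_adjR_eq_dens G' U T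
  have hqq0 := sum_adjR_eq_dens G' Q T
  have e1 : ∑ x ∈ U, ∑ y ∈ T, adjR G x y ≤
      ∑ x ∈ U, ∑ y ∈ T, adjR G' x y + ∑ x ∈ U, ∑ y ∈ T, dif G G' x y := by
    rw [← Finset.sum_add_distrib]
    refine Finset.sum_le_sum fun x _ => ?_
    rw [← Finset.sum_add_distrib]
    refine Finset.sum_le_sum fun y _ => ?_
    have := le_abs_self (adjR G x y - adjR G' x y)
    unfold dif; linarith
  have e2 : ∑ x ∈ Q, ∑ y ∈ T, adjR G' x y ≤ ∑ x ∈ A, ∑ y ∈ T, dif G G' x y := by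
    calc ∑ x ∈ Q, ∑ y ∈ T, adjR G' x y ≤ ∑ x ∈ Q, ∑ y ∈ T, dif G G' x y := by
          refine Finset.sum_le_sum fun x hx => Finset.sum_le_sum fun y hy => ?_
          have h0 : adjR G x y = 0 := if_neg (hQT x hx y hy)
          unfold dif
          rw [h0, zero_sub, abs_neg]
          exact le_abs_self _
      _ ≤ _ := Finset.sum_le_sum_of_subset_of_nonneg hQ fun x _ _ =>
          Finset.sum_nonneg fun y _ => dif_nonneg _ _ _ _
  have m1 : (Q.card / A.card : ℝ) * ∑ x ∈ U, ∑ y ∈ T, adjR G' x y ≤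
      (U.card / A.card : ℝ) * ∑ x ∈ Q, ∑ y ∈ T, adjR G' x y + 2 * ε * (U.card * T.card) := by
    rw [hu0, hqq0]
    calc (Q.card / A.card : ℝ) * (dens G' U T * (U.card * T.card))
        ≤ (Q.card / A.card : ℝ) * ((dens G' Q T + 2 * ε) * (U.card * T.card)) := by gcongr
      _ = (U.card / A.card : ℝ) * (dens G' Q T * (Q.card * T.card))
          + (Q.card / A.card : ℝ) * (2 * ε * (U.card * T.card)) := by ring
      _ ≤ _ := by
          refine add_le_add le_rfl ?_
          exact mul_le_of_le_one_left (by positivity) hq1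
  have m2 : (Q.card / A.card : ℝ) * ∑ x ∈ U, ∑ y ∈ T, adjR G x y ≤
      (Q.card / A.card : ℝ) * ∑ x ∈ U, ∑ y ∈ T, adjR G' x y + ∑ x ∈ U, ∑ y ∈ T, dif G G' x y := by
    calc _ ≤ (Q.card / A.card : ℝ) * (∑ x ∈ U, ∑ y ∈ T, adjR G' x y
          + ∑ x ∈ U, ∑ y ∈ T, dif G G' x y) := by gcongr
      _ ≤ _ := by
          rw [mul_add]; gcongr
          exact mul_le_of_le_one_left hD1 hq1
  have m3 : (U.card / A.card : ℝ) * ∑ x ∈ Q, ∑ y ∈ T, adjR G' x y ≤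
      (U.card / A.card : ℝ) * ∑ x ∈ A, ∑ y ∈ T, dif G G' x y := by gcongr
  linarith

/-! ### Good vertices -/

/-- At most eight values of `f` can each be taken on an eighth of `A`. -/
lemma card_popular {A : Finset V} (hA : A.Nonempty) (f : V → κ) {B : Finset V}
    (h : ∀ y ∈ B, A.card ≤ 8 * (A.filter fun x => f x = f y).card) :
    (B.image f).card ≤ 8 := by
  have h1 : ∑ k ∈ B.image f, (A.filter fun x => f x = k).card ≤ A.card := by
    rw [← Finset.card_biUnion]
    · refine card_le_card fun x hx => ?_
      obtain ⟨k, -, hk⟩ := mem_biUnion.1 hx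
      exact (mem_filter.1 hk).1
    · intro k _ k' _ hkk'
      refine disjoint_left.2 fun x hx hx' => hkk' ?_
      rw [← (mem_filter.1 hx).2, (mem_filter.1 hx').2]
  have h2 : (B.image f).card * A.card ≤ ∑ k ∈ B.image f, 8 * (A.filter fun x => f x = k).card := by
    rw [← smul_eq_mul]
    refine Finset.card_nsmul_le_sum _ _ _ fun k hk => ?_
    obtain ⟨y, hy, rfl⟩ := mem_image.1 hk
    exact h y hy
  rw [← Finset.mul_sum] at h2
  have h3 : 0 < A.card := hA.card_pos
  nlinarith

/-- The part of `x` in `P`, restricted to the vertices on the same side as `x`. -/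
def cell (P : Finpartition (univ : Finset V)) (S : V → Bool) (x : V) : Finset V :=
  (P.part x).filter fun y => S y = S x

/-- The vertex `x` is good at level `i` if its value of `part i` is shared by at least an eighth of
its cell. -/
def Good (P : Finpartition (univ : Finset V)) (S : V → Bool) (part : ℕ → V → κ) (i : ℕ) (x : V) :
    Prop :=
  (cell P S x).card ≤ 8 * ((cell P S x).filter fun y => part i y = part i x).card

variable {P : Finpartition (univ : Finset V)} {S : V → Bool} {part : ℕ → V → κ} {hid : V → η}

lemma mem_cell_self (x : V) : x ∈ cell P S x := by
  simp [cell, P.mem_part (mem_univ x)]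

lemma part_eq_of_mem' {W : Finset V} (hW : W ∈ P.parts) {y : V} (hy : y ∈ W) : P.part y = W :=
  P.part_eq_of_mem hW hy

lemma cell_eq {W : Finset V} (hW : W ∈ P.parts) {y : V} (hy : y ∈ W) :
    cell P S y = W.filter fun x => S x = S y := by
  unfold cell; rw [part_eq_of_mem' hW hy]

lemma Good.mono (hnest : ∀ i x y, part (i + 1) x = part (i + 1) y → part i x = part i y)
    {i j : ℕ} (hij : i ≤ j) {x : V} (h : Good P S part j x) : Good P S part i x := by
  induction j, hij using Nat.le_induction with
  | base => exact h
  | succ j _ ih =>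
    refine ih (le_trans h ?_)
    exact Nat.mul_le_mul_left 8
      (card_le_card (monotone_filter_right _ fun y _ hy => hnest _ _ _ hy))

lemma good_zero (h0 : ∀ x y, part 0 x = part 0 y) (x : V) : Good P S part 0 x := by
  unfold Good
  rw [Finset.filter_true_of_mem fun y _ => h0 y x]
  omega

lemma exists_fail (h0 : ∀ x y, part 0 x = part 0 y) {t : ℕ} {x : V}
    (h : ¬ Good P S part t x) : ∃ i < t, Good P S part i x ∧ ¬ Good P S part (i + 1) x := by
  induction t with
  | zero => exact absurd (good_zero h0 x) h
  | succ t ih =>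
    by_cases ht : Good P S part t x
    · exact ⟨t, by omega, ht, h⟩
    · obtain ⟨i, hi, h'⟩ := ih ht
      exact ⟨i, by omega, h'⟩

/-- Within a part of `P`, the good vertices take few values of the pair `(part i, hid)`. This is why
splitting each part by this pair into blocks costs only a factor `8 |η|` in the error terms. -/
lemma card_good_hats [Fintype η] (hS : ∀ x y, hid x = hid y → S x = S y) (i : ℕ)
    {W : Finset V} (hW : W ∈ P.parts) :
    ((W.filter fun y => Good P S part i y).image fun y => (part i y, hid y)).card
      ≤ 8 * Fintype.card η := by
  have hsub : ((W.filter fun y => Good P S part i y).image fun y => (part i y, hid y)) ⊆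
      (univ : Finset η).biUnion fun h =>
        (((W.filter fun y => Good P S part i y).filter fun y => hid y = h).image (part i)).image
          fun k => (k, h) := by
    intro q hq
    obtain ⟨y, hy, rfl⟩ := mem_image.1 hq
    refine mem_biUnion.2 ⟨hid y, mem_univ _, mem_image.2 ⟨part i y, ?_, rfl⟩⟩
    exact mem_image.2 ⟨y, mem_filter.2 ⟨hy, rfl⟩, rfl⟩
  refine (card_le_card hsub).trans ((card_biUnion_le_card_mul _ _ 8 fun h _ => ?_).trans_eq ?_)
  · refine card_image_le.trans ?_
    rcases ((W.filter fun y => Good P S part i y).filter fun y => hid y = h).eq_empty_or_nonempty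
      with he | ⟨y₀, hy₀⟩
    · rw [he]; simp
    · obtain ⟨hy₁, hh⟩ := mem_filter.1 hy₀
      have hy₂ := (mem_filter.1 hy₁).1
      refine card_popular (A := cell P S y₀) ⟨y₀, mem_cell_self y₀⟩ (part i) ?_
      intro y hy
      obtain ⟨hy1, hh'⟩ := mem_filter.1 hy
      have hc : cell P S y₀ = cell P S y := by
        rw [cell_eq hW hy₂, cell_eq hW (mem_filter.1 hy1).1, hS _ _ (hh'.trans hh.symm)]
      rw [hc]
      exact (mem_filter.1 hy1).2
  · rw [Finset.card_univ, mul_comm]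

/-- The vertices of `A` without `G`-neighbours `y` whose pair `(part i y, hid y)` equals `h`. -/
noncomputable def avoid (G : SimpleGraph V) (part : ℕ → V → κ) (hid : V → η) (i : ℕ)
    (A : Finset V) (h : κ × η) : Finset V :=
  A.filter fun x => ∀ y, (part i y, hid y) = h → ¬ G.Adj x y

/-- The bound of `block`, summed over the blocks of good vertices of a single part `W`. -/
lemma sum_blocks [Fintype η] {G G' : SimpleGraph V} {ε : ℝ} (hε : 0 ≤ ε)
    (hS : ∀ x y, hid x = hid y → S x = S y) (i : ℕ)
    {A U Z₀ W : Finset V} (hU : U ⊆ A) (hA : A ⊆ Z₀) (hW : W ∈ P.parts) :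
    ∑ x ∈ U, ∑ y ∈ W.filter (fun y => Good P S part i y),
        adjR G x y * ((avoid G part hid i A (part i y, hid y)).card / A.card : ℝ) ≤
      ∑ x ∈ U, ∑ y ∈ W, dif G G' x y + (U.card / A.card : ℝ) * ∑ x ∈ A, ∑ y ∈ W, dif G G' x y
      + (2 + 8 * Fintype.card η) * ε * (U.card * W.card) + ε * (Z₀.card * W.card)
      + (if RegPair G' ε Z₀ W then 0 else 1) * (U.card * W.card) := by
  set Wg := W.filter (fun y => Good P S part i y) with hWg
  set q : V → κ × η := fun y => (part i y, hid y) with hq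
  set Hs := Wg.image q with hHs
  have hfib : ∀ (B : Finset V) (F : V → V → ℝ),
      ∑ h ∈ Hs, ∑ x ∈ B, ∑ y ∈ Wg.filter (fun y => q y = h), F x y = ∑ x ∈ B, ∑ y ∈ Wg, F x y := by
    intro B F
    rw [Finset.sum_comm]
    refine Finset.sum_congr rfl fun x _ => ?_
    exact Finset.sum_fiberwise_of_maps_to (fun y hy => mem_image_of_mem q hy) _
  have hsubW : ∀ B : Finset V, ∑ x ∈ B, ∑ y ∈ Wg, dif G G' x y ≤ ∑ x ∈ B, ∑ y ∈ W, dif G G' x y :=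
    fun B => Finset.sum_le_sum fun x _ => Finset.sum_le_sum_of_subset_of_nonneg
      (filter_subset _ _) fun y _ _ => dif_nonneg _ _ _ _
  have hcard : ∑ h ∈ Hs, ((Wg.filter (fun y => q y = h)).card : ℝ) = Wg.card := by
    rw [← Nat.cast_sum, ← Finset.card_eq_sum_card_image]
  have hcardW : (Wg.card : ℝ) ≤ W.card := by exact_mod_cast card_le_card (filter_subset _ _)
  have hHcard : (Hs.card : ℝ) ≤ 8 * Fintype.card η := by
    exact_mod_cast card_good_hats (P := P) (part := part) hS i hW
  have hsum : ∑ h ∈ Hs, ((avoid G part hid i A h).card / A.card : ℝ) *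
        ∑ x ∈ U, ∑ y ∈ Wg.filter (fun y => q y = h), adjR G x y ≤
      ∑ h ∈ Hs, (∑ x ∈ U, ∑ y ∈ Wg.filter (fun y => q y = h), dif G G' x y
      + (U.card / A.card : ℝ) * ∑ x ∈ A, ∑ y ∈ Wg.filter (fun y => q y = h), dif G G' x y
      + 2 * ε * (U.card * (Wg.filter (fun y => q y = h)).card)
      + ε * (Z₀.card * (Wg.filter (fun y => q y = h)).card) + ε * (U.card * W.card)
      + (if RegPair G' ε Z₀ W then 0 else 1) * (U.card * (Wg.filter (fun y => q y = h)).card)) := by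
    refine Finset.sum_le_sum fun h _ => ?_
    refine block hε hU (filter_subset _ _) hA
      ((filter_subset _ _).trans (filter_subset _ _)) ?_
    intro x hx y hy
    exact (mem_filter.1 hx).2 y (mem_filter.1 hy).2
  have hL : ∑ x ∈ U, ∑ y ∈ Wg, adjR G x y * ((avoid G part hid i A (part i y, hid y)).card / A.card : ℝ)
      = ∑ h ∈ Hs, ((avoid G part hid i A h).card / A.card : ℝ) *
        ∑ x ∈ U, ∑ y ∈ Wg.filter (fun y => q y = h), adjR G x y := by
    rw [← hfib]
    refine Finset.sum_congr rfl fun h _ => ?_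
    rw [Finset.mul_sum]
    refine Finset.sum_congr rfl fun x _ => ?_
    rw [Finset.mul_sum]
    refine Finset.sum_congr rfl fun y hy => ?_
    rw [← (mem_filter.1 hy).2, mul_comm]
  rw [hL]
  refine hsum.trans ?_
  simp only [Finset.sum_add_distrib, ← Finset.mul_sum, hfib, hcard, Finset.sum_const, nsmul_eq_mul]
  have i1 := hsubW U
  have i2 : (U.card / A.card : ℝ) * ∑ x ∈ A, ∑ y ∈ Wg, dif G G' x y ≤
    (U.card / A.card : ℝ) * ∑ x ∈ A, ∑ y ∈ W, dif G G' x y :=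
    mul_le_mul_of_nonneg_left (hsubW A) (by positivity)
  have i3 : 2 * ε * ((U.card : ℝ) * Wg.card) ≤ 2 * ε * (U.card * W.card) := by gcongr
  have i4 : ε * ((Z₀.card : ℝ) * Wg.card) ≤ ε * (Z₀.card * W.card) := by gcongr
  have i5 : (Hs.card : ℝ) * (ε * (U.card * W.card)) ≤
    8 * Fintype.card η * (ε * (U.card * W.card)) := by gcongr
  have i6 : (if RegPair G' ε Z₀ W then (0 : ℝ) else 1) * (U.card * Wg.card) ≤
    (if RegPair G' ε Z₀ W then 0 else 1) * (U.card * W.card) := by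
    apply mul_le_mul_of_nonneg_left _ (by split_ifs <;> norm_num)
    gcongr
  linarith

/-- If `x` is not good at level `i + 1`, then all but an eighth of its cell differs from `x` in
`part (i + 1)`, and each such vertex avoids the blocks of all but a quarter of the neighbours of `x`.
Hence the neighbours of `x` are avoided by the average vertex of the cell, up to a loss of
`D / 8 + D / 4`. -/
lemma gain {G : SimpleGraph V} {D : ℕ} {i : ℕ}
    (hreg : ∀ x, (univ.filter fun y => G.Adj x y).card = D)
    (hsep : ∀ x x', S x = S x' → part (i + 1) x ≠ part (i + 1) x' →
      4 * (univ.filter fun y => G.Adj x y ∧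
        ∃ y', part i y' = part i y ∧ hid y' = hid y ∧ G.Adj x' y').card ≤ D)
    {x : V} (hx : ¬ Good P S part (i + 1) x) (Y : Finset V) :
    ∑ y ∈ Y, adjR G x y - 3 / 8 * D ≤
      ∑ y ∈ Y, adjR G x y * ((avoid G part hid i (cell P S x) (part i y, hid y)).card
        / (cell P S x).card : ℝ) := by
  set A := cell P S x with hA
  have hApos : (0 : ℝ) < A.card := by exact_mod_cast card_pos.2 ⟨x, mem_cell_self x⟩
  set g : ℝ := ∑ y ∈ Y, adjR G x y with hg
  have hdeg : ∑ y, adjR G x y = D := by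
    unfold adjR; rw [← hreg x]; simp
  have hgD : g ≤ D := by
    rw [← hdeg]
    exact Finset.sum_le_sum_of_subset_of_nonneg (subset_univ _) fun y _ _ => adjR_nonneg _ _ _
  have hR : ∑ y ∈ Y, adjR G x y * ((avoid G part hid i A (part i y, hid y)).card / A.card : ℝ) =
      (∑ x' ∈ A, ∑ y ∈ Y, adjR G x y *
        (if ∀ y', (part i y', hid y') = (part i y, hid y) → ¬ G.Adj x' y' then 1 else 0)) / A.card := by
    rw [Finset.sum_comm, Finset.sum_div]
    refine Finset.sum_congr rfl fun y _ => ?_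
    rw [← Finset.mul_sum, mul_div_assoc]
    congr 2
    unfold avoid
    simp
  rw [hR, le_div_iff₀ hApos]
  have hpt : ∀ x' ∈ A, g - D / 4 - (if part (i + 1) x' = part (i + 1) x then (D : ℝ) else 0) ≤
      ∑ y ∈ Y, adjR G x y *
        (if ∀ y', (part i y', hid y') = (part i y, hid y) → ¬ G.Adj x' y' then 1 else 0) := by
    intro x' hx'
    split_ifs with heq
    · refine le_trans (b := 0) ?_ ?_
      · have : (0 : ℝ) ≤ D := by positivity
        linarith
      · refine Finset.sum_nonneg fun y _ => mul_nonneg (adjR_nonneg _ _ _) ?_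
        split_ifs <;> norm_num
    · have hs := hsep x x' (mem_filter.1 hx').2.symm (Ne.symm heq)
      have hs' : (4 : ℝ) * (univ.filter fun y => G.Adj x y ∧
        ∃ y', part i y' = part i y ∧ hid y' = hid y ∧ G.Adj x' y').card ≤ D := by exact_mod_cast hs
      have hle : g ≤ ∑ y ∈ Y, adjR G x y *
          (if ∀ y', (part i y', hid y') = (part i y, hid y) → ¬ G.Adj x' y' then 1 else 0)
          + (univ.filter fun y => G.Adj x y ∧
        ∃ y', part i y' = part i y ∧ hid y' = hid y ∧ G.Adj x' y').card := by
        rw [Finset.card_filter, Nat.cast_sum]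
        calc g ≤ ∑ y ∈ Y, (adjR G x y *
          (if ∀ y', (part i y', hid y') = (part i y, hid y) → ¬ G.Adj x' y' then 1 else 0)
            + ((if G.Adj x y ∧ ∃ y', part i y' = part i y ∧ hid y' = hid y ∧ G.Adj x' y'
                then 1 else 0 : ℕ) : ℝ)) := by
              refine Finset.sum_le_sum fun y _ => ?_
              by_cases ha : G.Adj x y
              · by_cases hb : ∃ y', part i y' = part i y ∧ hid y' = hid y ∧ G.Adj x' y'
                · rw [if_pos (⟨ha, hb⟩ : _ ∧ _)]
                  have := adjR_le_one G x y
                  have h2 : 0 ≤ adjR G x y * (if ∀ y', (part i y', hid y') = (part i y, hid y) →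
                    ¬ G.Adj x' y' then (1 : ℝ) else 0) :=
                    mul_nonneg (adjR_nonneg _ _ _) (by split_ifs <;> norm_num)
                  push_cast
                  linarith
                · rw [if_pos (c := ∀ y', (part i y', hid y') = (part i y, hid y) → ¬ G.Adj x' y')]
                  · rw [mul_one]
                    exact le_add_of_nonneg_right (Nat.cast_nonneg _)
                  · intro y' hy' hadj
                    obtain ⟨h1, h2⟩ := Prod.mk.inj hy'
                    exact hb ⟨y', h1, h2, hadj⟩
              · have : adjR G x y = 0 := if_neg ha
                rw [this, zero_mul, zero_add]
                exact Nat.cast_nonneg _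
          _ ≤ _ := by
              rw [Finset.sum_add_distrib]
              gcongr
              exact subset_univ _
      linarith
  refine le_trans ?_ (Finset.sum_le_sum hpt)
  rw [Finset.sum_sub_distrib, Finset.sum_const, nsmul_eq_mul, ← Finset.sum_filter,
    Finset.sum_const, nsmul_eq_mul]
  have hlow : (8 : ℝ) * (A.filter fun y => part (i + 1) y = part (i + 1) x).card ≤ A.card := by
    unfold Good at hx
    push Not at hx
    exact_mod_cast hx.le
  have hD0 : (0 : ℝ) ≤ D := by positivity
  nlinarith [mul_le_mul_of_nonneg_right hlow hD0]

/-! ### Charging -/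

/-- The vertex `x` is good at level `i` but not at level `i + 1`. -/
def Fails (P : Finpartition (univ : Finset V)) (S : V → Bool) (part : ℕ → V → κ) (i : ℕ) (x : V) :
    Prop :=
  Good P S part i x ∧ ¬ Good P S part (i + 1) x

lemma Fails.unique (hnest : ∀ i x y, part (i + 1) x = part (i + 1) y → part i x = part i y)
    {i j : ℕ} {x : V} (hi : Fails P S part i x) (hj : Fails P S part j x) : i = j := by
  rcases lt_trichotomy i j with h | h | h
  · exact absurd (hj.1.mono hnest h) hi.2
  · exact h
  · exact absurd (hi.1.mono hnest h) hj.2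

/-- Each vertex fails at no more than one level, so sums over the levels do not accumulate. -/
lemma sum_fails_le (hnest : ∀ i x y, part (i + 1) x = part (i + 1) y → part i x = part i y)
    (t : ℕ) (A : Finset V) {F : V → ℝ} (hF : ∀ x, 0 ≤ F x) :
    ∑ i ∈ range t, ∑ x ∈ A.filter (fun x => Fails P S part i x), F x ≤ ∑ x ∈ A, F x := by
  rw [← Finset.sum_biUnion]
  · refine Finset.sum_le_sum_of_subset_of_nonneg ?_ fun x _ _ => hF x
    intro x hx
    obtain ⟨i, -, hi⟩ := mem_biUnion.1 hx
    exact (mem_filter.1 hi).1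
  · intro i _ j _ hij
    refine disjoint_left.2 fun x hx hx' => hij ?_
    exact (mem_filter.1 hx).2.unique hnest (mem_filter.1 hx').2

lemma sum_parts' (P : Finpartition (univ : Finset V)) (F : V → ℝ) :
    ∑ W ∈ P.parts, ∑ y ∈ W, F y = ∑ y, F y := by
  conv_rhs => rw [← P.biUnion_parts]
  rw [Finset.sum_biUnion P.disjoint]
  rfl

lemma sum_card_parts' (P : Finpartition (univ : Finset V)) :
    ∑ W ∈ P.parts, (W.card : ℝ) = Fintype.card V := by
  have := sum_parts' P (fun _ => 1)
  simpa using this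

/-- Contribution of the vertices of one cell `A` failing at one level `i`. -/
lemma level_bound [Fintype η] {G G' : SimpleGraph V} {ε : ℝ} (hε : 0 ≤ ε) {D i : ℕ}
    (hS : ∀ x y, hid x = hid y → S x = S y)
    (hreg : ∀ x, (univ.filter fun y => G.Adj x y).card = D)
    (hsep : ∀ x x', S x = S x' → part (i + 1) x ≠ part (i + 1) x' →
      4 * (univ.filter fun y => G.Adj x y ∧
        ∃ y', part i y' = part i y ∧ hid y' = hid y ∧ G.Adj x' y').card ≤ D)
    {Z₀ : Finset V} (hZ : Z₀ ∈ P.parts) (σ : Bool) {A U : Finset V}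
    (hA : A = Z₀.filter fun x => S x = σ) (hU : U = A.filter fun x => Fails P S part i x) :
    ∑ x ∈ U, (∑ y ∈ univ.filter (fun y => Good P S part i y), adjR G x y - 3 / 8 * D) ≤
      ∑ x ∈ U, ∑ y, dif G G' x y + (U.card / A.card : ℝ) * ∑ x ∈ A, ∑ y, dif G G' x y
      + (2 + 8 * Fintype.card η) * ε * (U.card * Fintype.card V) + ε * (Z₀.card * Fintype.card V)
      + ∑ W ∈ P.parts, (if RegPair G' ε Z₀ W then (0 : ℝ) else 1) * (U.card * W.card) := by
  have hUA : U ⊆ A := hU ▸ filter_subset _ _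
  have hAZ : A ⊆ Z₀ := hA ▸ filter_subset _ _
  have h1 : ∑ x ∈ U, (∑ y ∈ univ.filter (fun y => Good P S part i y), adjR G x y - 3 / 8 * D) ≤
      ∑ W ∈ P.parts, ∑ x ∈ U, ∑ y ∈ W.filter (fun y => Good P S part i y),
        adjR G x y * ((avoid G part hid i A (part i y, hid y)).card / A.card : ℝ) := by
    rw [Finset.sum_comm]
    refine Finset.sum_le_sum fun x hx => ?_
    have hxA := hUA hx
    have hcell : cell P S x = A := by
      rw [cell_eq hZ (hAZ hxA), hA]
      rw [hA] at hxA
      rw [(mem_filter.1 hxA).2]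
    have hfail : Fails P S part i x := by rw [hU] at hx; exact (mem_filter.1 hx).2
    refine (gain hreg hsep hfail.2 _).trans_eq ?_
    rw [hcell, Finset.sum_filter, ← sum_parts' P]
    refine Finset.sum_congr rfl fun W _ => ?_
    rw [Finset.sum_filter]
  refine h1.trans ((Finset.sum_le_sum fun W hW => sum_blocks (G' := G') hε hS i hUA hAZ hW).trans_eq ?_)
  have hcomm : ∀ B : Finset V, ∑ W ∈ P.parts, ∑ x ∈ B, ∑ y ∈ W, dif G G' x y =
      ∑ x ∈ B, ∑ y, dif G G' x y := by
    intro B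
    rw [Finset.sum_comm]
    exact Finset.sum_congr rfl fun x _ => sum_parts' P _
  simp only [Finset.sum_add_distrib, ← Finset.mul_sum, hcomm, sum_card_parts']

/-- Contribution of all failures in one cell `A`. Since the failing sets of different levels are
disjoint, only the small-set error for `Z₀` picks up a factor `t`. -/
lemma cell_bound [Fintype η] {G G' : SimpleGraph V} {ε : ℝ} (hε : 0 ≤ ε) {D t : ℕ}
    (hnest : ∀ i x y, part (i + 1) x = part (i + 1) y → part i x = part i y)
    (hS : ∀ x y, hid x = hid y → S x = S y)
    (hreg : ∀ x, (univ.filter fun y => G.Adj x y).card = D)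
    (hsep : ∀ i < t, ∀ x x', S x = S x' → part (i + 1) x ≠ part (i + 1) x' →
      4 * (univ.filter fun y => G.Adj x y ∧
        ∃ y', part i y' = part i y ∧ hid y' = hid y ∧ G.Adj x' y').card ≤ D)
    {Z₀ : Finset V} (hZ : Z₀ ∈ P.parts) (σ : Bool) {A : Finset V}
    (hA : A = Z₀.filter fun x => S x = σ) :
    ∑ i ∈ range t, ∑ x ∈ A.filter (fun x => Fails P S part i x),
        (∑ y ∈ univ.filter (fun y => Good P S part i y), adjR G x y - 3 / 8 * D) ≤
      2 * ∑ x ∈ A, ∑ y, dif G G' x y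
      + (2 + 8 * Fintype.card η) * ε * (A.card * Fintype.card V)
      + t * (ε * (Z₀.card * Fintype.card V))
      + ∑ W ∈ P.parts, (if RegPair G' ε Z₀ W then (0 : ℝ) else 1) * (A.card * W.card) := by
  refine (Finset.sum_le_sum fun i hi => level_bound (G' := G') hε hS hreg
    (hsep i (mem_range.1 hi)) hZ σ hA rfl).trans ?_
  set n : ℝ := (Fintype.card V : ℝ) with hn
  have hcardsum : ∑ i ∈ range t, ((A.filter fun x => Fails P S part i x).card : ℝ) ≤ A.card := by
    have := sum_fails_le (P := P) (S := S) hnest t A (F := fun _ => 1) (fun _ => zero_le_one)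
    simpa using this
  have hdif0 : ∀ x, 0 ≤ ∑ y, dif G G' x y := fun x => Finset.sum_nonneg fun y _ => dif_nonneg _ _ _ _
  have hsum0 : 0 ≤ ∑ x ∈ A, ∑ y, dif G G' x y := Finset.sum_nonneg fun x _ => hdif0 x
  simp only [Finset.sum_add_distrib]
  have j1 : ∑ i ∈ range t, ∑ x ∈ A.filter (fun x => Fails P S part i x), ∑ y, dif G G' x y ≤
      ∑ x ∈ A, ∑ y, dif G G' x y := sum_fails_le hnest t A hdif0
  have j2 : ∑ i ∈ range t, ((A.filter fun x => Fails P S part i x).card / A.card : ℝ) *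
      ∑ x ∈ A, ∑ y, dif G G' x y ≤ ∑ x ∈ A, ∑ y, dif G G' x y := by
    rw [← Finset.sum_mul, ← Finset.sum_div]
    exact mul_le_of_le_one_left hsum0 (div_le_one_of_le₀ hcardsum (Nat.cast_nonneg _))
  have j3 : ∑ i ∈ range t, (2 + 8 * Fintype.card η) * ε *
      ((A.filter fun x => Fails P S part i x).card * n) ≤
      (2 + 8 * Fintype.card η) * ε * (A.card * n) := by
    rw [← Finset.mul_sum, ← Finset.sum_mul]
    gcongr
  have j4 : ∑ i ∈ range t, ε * (Z₀.card * n) = t * (ε * (Z₀.card * n)) := by simp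
  have j5 : ∑ i ∈ range t, ∑ W ∈ P.parts, (if RegPair G' ε Z₀ W then (0 : ℝ) else 1) *
      ((A.filter fun x => Fails P S part i x).card * W.card) ≤
      ∑ W ∈ P.parts, (if RegPair G' ε Z₀ W then (0 : ℝ) else 1) * (A.card * W.card) := by
    rw [Finset.sum_comm]
    refine Finset.sum_le_sum fun W _ => ?_
    rw [← Finset.mul_sum, ← Finset.sum_mul]
    refine mul_le_mul_of_nonneg_left ?_ (by split_ifs <;> norm_num)
    gcongr
  linarith

/-- The edges from failing vertices to vertices good at the same level are, beyond `3 / 8` of the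
degree, bounded by the number of modifications plus a regularity error. -/
lemma upper_bound [Fintype η] {G G' : SimpleGraph V} {ε : ℝ} (hε : 0 ≤ ε) {D t : ℕ}
    (hnest : ∀ i x y, part (i + 1) x = part (i + 1) y → part i x = part i y)
    (hS : ∀ x y, hid x = hid y → S x = S y)
    (hreg : ∀ x, (univ.filter fun y => G.Adj x y).card = D)
    (hsep : ∀ i < t, ∀ x x', S x = S x' → part (i + 1) x ≠ part (i + 1) x' →
      4 * (univ.filter fun y => G.Adj x y ∧
        ∃ y', part i y' = part i y ∧ hid y' = hid y ∧ G.Adj x' y').card ≤ D)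
    (hP : IsRegularPartitionW G' ε P) :
    ∑ i ∈ range t, ∑ x ∈ univ.filter (fun x => Fails P S part i x),
        (∑ y ∈ univ.filter (fun y => Good P S part i y), adjR G x y - 3 / 8 * D) ≤
      2 * ∑ x, ∑ y, dif G G' x y
      + (3 + 2 * t + 8 * Fintype.card η) * ε * (Fintype.card V : ℝ) ^ 2 := by
  set n : ℝ := (Fintype.card V : ℝ) with hn
  have hsplit : ∀ F : V → ℝ, ∑ Z₀ ∈ P.parts, ∑ σ : Bool, ∑ x ∈ Z₀.filter (fun x => S x = σ), F x =
      ∑ x, F x := by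
    intro F
    rw [← sum_parts' P]
    refine Finset.sum_congr rfl fun Z₀ _ => ?_
    exact Finset.sum_fiberwise _ _ _
  have hcardσ : ∀ Z₀ : Finset V,
      ∑ σ : Bool, ((Z₀.filter fun x => S x = σ).card : ℝ) = Z₀.card := by
    intro Z₀
    have := Finset.sum_fiberwise Z₀ S (fun _ => (1 : ℝ))
    simpa using this
  have hL : ∑ Z₀ ∈ P.parts, ∑ σ : Bool, ∑ i ∈ range t,
      ∑ x ∈ (Z₀.filter (fun x => S x = σ)).filter (fun x => Fails P S part i x),
        (∑ y ∈ univ.filter (fun y => Good P S part i y), adjR G x y - 3 / 8 * D) =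
      ∑ i ∈ range t, ∑ x ∈ univ.filter (fun x => Fails P S part i x),
        (∑ y ∈ univ.filter (fun y => Good P S part i y), adjR G x y - 3 / 8 * D) := by
    have : ∀ Z₀ ∈ P.parts, ∑ σ : Bool, ∑ i ∈ range t,
      ∑ x ∈ (Z₀.filter (fun x => S x = σ)).filter (fun x => Fails P S part i x),
        (∑ y ∈ univ.filter (fun y => Good P S part i y), adjR G x y - 3 / 8 * D) =
      ∑ i ∈ range t, ∑ σ : Bool,
      ∑ x ∈ (Z₀.filter (fun x => S x = σ)).filter (fun x => Fails P S part i x),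
        (∑ y ∈ univ.filter (fun y => Good P S part i y), adjR G x y - 3 / 8 * D) :=
      fun Z₀ _ => Finset.sum_comm
    rw [Finset.sum_congr rfl this, Finset.sum_comm]
    refine Finset.sum_congr rfl fun i _ => ?_
    simp only [Finset.sum_filter (p := fun x => Fails P S part i x)]
    exact hsplit _
  rw [← hL]
  refine (Finset.sum_le_sum fun Z₀ hZ => Finset.sum_le_sum fun σ _ =>
    cell_bound (G' := G') hε hnest hS hreg hsep hZ σ rfl).trans ?_
  simp only [Finset.sum_add_distrib, ← Finset.mul_sum, hsplit, ← Finset.sum_mul, hcardσ,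
    Finset.sum_const, Finset.card_univ, Fintype.card_bool, nsmul_eq_mul]
  have hirr : ∑ Z₀ ∈ P.parts, ∑ σ : Bool, ∑ W ∈ P.parts,
      (if RegPair G' ε Z₀ W then (0 : ℝ) else 1) *
        (((Z₀.filter fun x => S x = σ).card : ℝ) * W.card) ≤ ε * n ^ 2 := by
    refine le_trans (le_of_eq ?_) hP
    rw [Finset.sum_filter, Finset.sum_product]
    refine Finset.sum_congr rfl fun Z₀ _ => ?_
    rw [Finset.sum_comm]
    refine Finset.sum_congr rfl fun W _ => ?_
    rw [← Finset.mul_sum, ← Finset.sum_mul, hcardσ]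
    by_cases h : RegPair G' ε Z₀ W <;> simp [h]
  have hcp : ∑ Z₀ ∈ P.parts, (Z₀.card : ℝ) = n := sum_card_parts' P
  simp only [hcp]
  push_cast
  nlinarith [hirr]

/-- An edge `xy` with `x` not good at level `t` is charged from whichever endpoint fails first: that
endpoint fails at a level at which the other one is still good. So at least half of the degree of the
bad vertices is charged, and `1 / 2 - 3 / 8 = 1 / 8` remains. -/
lemma lower_bound {G : SimpleGraph V} {D t : ℕ}
    (h0 : ∀ x y, part 0 x = part 0 y)
    (hnest : ∀ i x y, part (i + 1) x = part (i + 1) y → part i x = part i y)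
    (hreg : ∀ x, (univ.filter fun y => G.Adj x y).card = D) :
    ((univ.filter fun x => ¬ Good P S part t x).card : ℝ) * D / 8 ≤
    ∑ i ∈ range t, ∑ x ∈ univ.filter (fun x => Fails P S part i x),
        (∑ y ∈ univ.filter (fun y => Good P S part i y), adjR G x y - 3 / 8 * D) := by
  set b : ℝ := ((univ.filter fun x => ¬ Good P S part t x).card : ℝ) with hb
  have hdeg : ∀ x, ∑ y, adjR G x y = D := by
    intro x; unfold adjR; rw [← hreg x]; simp
  set cnt : V → V → ℝ := fun x y => ∑ i ∈ range t,
    if Fails P S part i x ∧ Good P S part i y then 1 else 0 with hcnt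
  have hcnt0 : ∀ x y, 0 ≤ cnt x y := fun x y => Finset.sum_nonneg fun i _ => by
    split_ifs <;> norm_num
  have hcnt1 : ∀ x y i, i < t → Fails P S part i x → Good P S part i y → 1 ≤ cnt x y := by
    intro x y i hi hf hg
    have := Finset.single_le_sum (f := fun i =>
      if Fails P S part i x ∧ Good P S part i y then (1 : ℝ) else 0)
      (fun i _ => by split_ifs <;> norm_num) (mem_range.2 hi)
    beta_reduce at this
    rw [if_pos ⟨hf, hg⟩] at this
    exact this
  have hpair : ∀ x y, ¬ Good P S part t x → 1 ≤ cnt x y + cnt y x := by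
    intro x y hx
    obtain ⟨i, hi, hf⟩ := exists_fail h0 hx
    by_cases hy : Good P S part i y
    · have := hcnt1 x y i hi hf hy
      have := hcnt0 y x
      linarith
    · obtain ⟨j, hj, hf'⟩ := exists_fail h0 hy
      have := hcnt1 y x j (hj.trans hi) hf' (hf.1.mono hnest hj.le)
      have := hcnt0 x y
      linarith
  have hE : ∑ i ∈ range t, ∑ x ∈ univ.filter (fun x => Fails P S part i x),
        ∑ y ∈ univ.filter (fun y => Good P S part i y), adjR G x y =
      ∑ x, ∑ y, adjR G x y * cnt x y := by
    simp only [hcnt, Finset.mul_sum]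
    simp only [Finset.sum_filter]
    rw [Finset.sum_comm]
    refine Finset.sum_congr rfl fun x _ => ?_
    rw [Finset.sum_comm (s := univ) (t := range t)]
    refine Finset.sum_congr rfl fun i _ => ?_
    by_cases hf : Fails P S part i x <;> simp [hf]
  have hsymm : ∑ x, ∑ y, adjR G x y * cnt y x = ∑ x, ∑ y, adjR G x y * cnt x y := by
    rw [Finset.sum_comm]
    refine Finset.sum_congr rfl fun x _ => Finset.sum_congr rfl fun y _ => ?_
    congr 1
    unfold adjR
    simp [G.adj_comm]
  have hbD : b * D ≤ 2 * ∑ x, ∑ y, adjR G x y * cnt x y := by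
    calc b * D = ∑ x ∈ univ.filter (fun x => ¬ Good P S part t x), ∑ y, adjR G x y := by
          rw [Finset.sum_congr rfl fun x _ => hdeg x]; simp [hb]
      _ ≤ ∑ x ∈ univ.filter (fun x => ¬ Good P S part t x), ∑ y, adjR G x y * (cnt x y + cnt y x) := by
          refine Finset.sum_le_sum fun x hx => Finset.sum_le_sum fun y _ => ?_
          exact le_mul_of_one_le_right (adjR_nonneg _ _ _) (hpair x y (mem_filter.1 hx).2)
      _ ≤ ∑ x, ∑ y, adjR G x y * (cnt x y + cnt y x) := by
          refine Finset.sum_le_sum_of_subset_of_nonneg (subset_univ _) fun x _ _ => ?_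
          exact Finset.sum_nonneg fun y _ =>
            mul_nonneg (adjR_nonneg _ _ _) (add_nonneg (hcnt0 _ _) (hcnt0 _ _))
      _ = _ := by
          simp only [mul_add, Finset.sum_add_distrib, hsymm]; ring
  have hcount : ∑ i ∈ range t, ((univ.filter fun x => Fails P S part i x).card : ℝ) ≤ b := by
    have := sum_fails_le (P := P) (S := S) hnest t (univ.filter fun x => ¬ Good P S part t x)
      (F := fun _ => 1) (fun _ => zero_le_one)
    simp only [sum_const, nsmul_eq_mul, mul_one] at this
    refine le_trans (Finset.sum_le_sum fun i hi => ?_) this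
    norm_cast
    refine card_le_card fun x hx => ?_
    have hf := (mem_filter.1 hx).2
    refine mem_filter.2 ⟨mem_filter.2 ⟨mem_univ _, fun hg => hf.2 (hg.mono hnest ?_)⟩, hf⟩
    exact mem_range.1 hi
  simp only [Finset.sum_sub_distrib, hE, Finset.sum_const, nsmul_eq_mul, ← Finset.sum_mul]
  have hD0 : (0 : ℝ) ≤ D := Nat.cast_nonneg _
  nlinarith [mul_le_mul_of_nonneg_right hcount hD0]

/-- Each part of `P` consists of two cells, in each of which the good vertices take at most eight
values of `part t`. -/
lemma card_good_le {t m : ℕ} (hsize : ∀ k, (univ.filter fun x => part t x = k).card ≤ m) :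
    (univ.filter fun x => Good P S part t x).card ≤ P.parts.card * (16 * m) := by
  have hsub : (univ.filter fun x => Good P S part t x) ⊆
      (P.parts ×ˢ (univ : Finset Bool)).biUnion fun q =>
        (((q.1.filter fun x => S x = q.2).filter fun x => Good P S part t x).image (part t)).biUnion
          fun k => univ.filter fun x => part t x = k := by
    intro x hx
    refine mem_biUnion.2 ⟨(P.part x, S x), ?_, mem_biUnion.2 ⟨part t x, ?_, by simp⟩⟩
    · simp [P.part_mem]
    · refine mem_image.2 ⟨x, ?_, rfl⟩
      simpa [P.mem_part (mem_univ x)] using hx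
  refine (card_le_card hsub).trans ((card_biUnion_le_card_mul _ _ (8 * m) ?_).trans_eq ?_)
  · rintro ⟨Z₀, σ⟩ hq
    have hZ : Z₀ ∈ P.parts := (mem_product.1 hq).1
    refine (card_biUnion_le_card_mul _ _ m fun k _ => hsize k).trans (Nat.mul_le_mul_right _ ?_)
    rcases ((Z₀.filter fun x => S x = σ).filter fun x => Good P S part t x).eq_empty_or_nonempty
      with he | ⟨x₀, hx₀⟩
    · simp only at he ⊢
      rw [he]; simp
    · refine card_popular (A := Z₀.filter fun x => S x = σ) ⟨x₀, (mem_filter.1 hx₀).1⟩ _ ?_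
      intro y hy
      obtain ⟨hy1, hy2⟩ := mem_filter.1 hy
      obtain ⟨hy3, hy4⟩ := mem_filter.1 hy1
      unfold Good at hy2
      simp only at hy4
      rw [cell_eq hZ hy3, hy4] at hy2
      exact hy2
  · rw [card_product]; simp; ring

/-! ### Numerical conclusion -/

lemma two_mul_ncard_edgeSet (H : SimpleGraph V) :
    2 * (H.edgeSet.ncard : ℝ) = ∑ x, ∑ y, adjR H x y := by
  have h := H.sum_degrees_eq_twice_card_edges
  rw [Set.ncard_eq_toFinset_card']
  have h2 : ∀ x, ∑ y, adjR H x y = (H.degree x : ℝ) := by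
    intro x
    unfold adjR
    rw [← H.card_neighborFinset_eq_degree, H.neighborFinset_eq_filter]
    simp
  simp only [h2]
  rw [← Nat.cast_sum, h]
  push_cast
  rfl

/-- The ordered pairs at which `G` and `G'` differ count each modified edge twice. -/
lemma sum_dif_eq (G G' : SimpleGraph V) :
    ∑ x, ∑ y, dif G G' x y = 2 * ((symmDiff G.edgeSet G'.edgeSet).ncard : ℝ) := by
  have h : (symmDiff G G').edgeSet = symmDiff G.edgeSet G'.edgeSet := by
    rw [symmDiff, symmDiff, SimpleGraph.edgeSet_sup, SimpleGraph.edgeSet_sdiff,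
      SimpleGraph.edgeSet_sdiff]
    rfl
  rw [← h, two_mul_ncard_edgeSet]
  refine Finset.sum_congr rfl fun x _ => Finset.sum_congr rfl fun y _ => ?_
  unfold dif adjR
  by_cases h1 : G.Adj x y <;> by_cases h2 : G'.Adj x y <;> simp [symmDiff, h1, h2]

/-- If few edges are modified and `P` is `p ^ 5`-regular, then more than half of the vertices are good
at level `t`, and hence `P` has many parts. -/
lemma parts_bound [Fintype η] {G G' : SimpleGraph V} {p : ℝ} (hp : 0 < p) (hp' : p ≤ 1 / 1000)
    {D t m : ℕ} (hDpos : 0 < D) (hDp : (D : ℝ) = p * Fintype.card V)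
    (hη : (Fintype.card η : ℝ) * p = 20) (ht : t * p ≤ 1)
    (h0 : ∀ x y, part 0 x = part 0 y)
    (hnest : ∀ i x y, part (i + 1) x = part (i + 1) y → part i x = part i y)
    (hS : ∀ x y, hid x = hid y → S x = S y)
    (hreg : ∀ x, (univ.filter fun y => G.Adj x y).card = D)
    (hsep : ∀ i < t, ∀ x x', S x = S x' → part (i + 1) x ≠ part (i + 1) x' →
      4 * (univ.filter fun y => G.Adj x y ∧
        ∃ y', part i y' = part i y ∧ hid y' = hid y ∧ G.Adj x' y').card ≤ D)
    (hsize : ∀ k, (univ.filter fun x => part t x = k).card ≤ m)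
    (hP : IsRegularPartitionW G' (p ^ 5) P)
    (hdif : ∑ x, ∑ y, dif G G' x y ≤ 1 / 64 * (Fintype.card V * D)) :
    Fintype.card V ≤ P.parts.card * (32 * m) := by
  have h1 := (lower_bound (P := P) (S := S) h0 hnest hreg).trans
    (upper_bound (by positivity) hnest hS hreg hsep hP)
  have h2 := card_good_le (P := P) (S := S) hsize
  have h3 := Finset.card_filter_add_card_filter_not (s := (univ : Finset V))
    (fun x => Good P S part t x)
  rw [card_univ] at h3
  set N : ℕ := Fintype.card V with hN
  set b : ℕ := (univ.filter fun x => ¬ Good P S part t x).card with hb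
  set n : ℝ := (N : ℝ) with hn
  have hn0 : 0 ≤ n := Nat.cast_nonneg _
  have hDR : (0 : ℝ) < D := by exact_mod_cast hDpos
  have herr : (3 + 2 * (t : ℝ) + 8 * Fintype.card η) * p ^ 5 * n ^ 2 ≤ 1 / 64 * (n * D) := by
    have e1 : (3 + 2 * (t : ℝ) + 8 * Fintype.card η) * p ≤ 165 := by nlinarith
    have e2 : p ^ 3 ≤ (1 / 1000) ^ 3 := by gcongr
    have e3 : (3 + 2 * (t : ℝ) + 8 * Fintype.card η) * p * p ^ 3 ≤ 165 * (1 / 1000) ^ 3 := by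
      gcongr
    calc (3 + 2 * (t : ℝ) + 8 * Fintype.card η) * p ^ 5 * n ^ 2
        = (3 + 2 * (t : ℝ) + 8 * Fintype.card η) * p * p ^ 3 * (n * D) := by rw [hDp]; ring
      _ ≤ 165 * (1 / 1000) ^ 3 * (n * D) := by gcongr
      _ ≤ _ := by gcongr; norm_num
  have h4 : (b : ℝ) * D / 8 ≤ 3 / 64 * n * D := by linarith
  have h5 : (b : ℝ) ≤ 3 / 8 * n := by
    by_contra hcon
    push Not at hcon
    nlinarith
  have h6 : 2 * b ≤ N := by
    have : (2 : ℝ) * b ≤ N := by linarith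
    exact_mod_cast this
  have h7 : P.parts.card * (32 * m) = 2 * (P.parts.card * (16 * m)) := by ring
  omega

end Main

/-! ### The construction -/

section Construction

variable {c : ℕ → ℕ} {t r : ℕ} {F : Type} [AddCommGroup F] [Fintype F]

/-- The visible coordinates `a 0, …, a t` of a vertex. -/
abbrev Coords (c : ℕ → ℕ) (t : ℕ) : Type := ∀ j : Fin (t + 1), Fin (c j)

/-- The remaining coordinates of a vertex: two masks `b` and `g` with one value per level, an inert
coordinate `d` that only tunes the density, and the side in the bipartition. -/
abbrev Rest (t r : ℕ) (F : Type) : Type := (Fin t → F) × (Fin t → F) × Fin (2 ^ r) × Bool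

/-- The vertices `(a, b, g, d, side)` of the construction. -/
abbrev Vert (c : ℕ → ℕ) (t r : ℕ) (F : Type) : Type := Coords c t × Rest t r F

/-- Adjacency: `x` and `y` are on opposite sides, have the same `d`, and at each level `l` the masks
of `x` and `y` add up to the letter at position `a l` of one vertex in the code word named by
`a (l + 1)` of the other, in both directions. Given `x`, the visible coordinates of a neighbour are
free and determine the rest. -/
def Linked (ev : ∀ i, Fin (c (i + 1)) → Fin (c i) → F) (x y : Vert c t r F) : Prop :=
  (∀ l : Fin t, x.2.1 l + y.2.2.1 l = ev l (x.1 l.succ) (y.1 l.castSucc)) ∧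
  (∀ l : Fin t, y.2.1 l + x.2.2.1 l = ev l (y.1 l.succ) (x.1 l.castSucc)) ∧
  x.2.2.2.1 = y.2.2.2.1 ∧ y.2.2.2.2 = !x.2.2.2.2

lemma Linked.symm {ev : ∀ i, Fin (c (i + 1)) → Fin (c i) → F} {x y : Vert c t r F}
    (h : Linked ev x y) : Linked ev y x :=
  ⟨h.2.1, h.1, h.2.2.1.symm, by rw [h.2.2.2, Bool.not_not]⟩

/-- The neighbour of `x` with visible coordinates `a`. -/
def nb (ev : ∀ i, Fin (c (i + 1)) → Fin (c i) → F) (x : Vert c t r F) (a : Coords c t) :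
    Vert c t r F :=
  (a, fun l => ev l (a l.succ) (x.1 l.castSucc) - x.2.2.1 l,
    fun l => ev l (x.1 l.succ) (a l.castSucc) - x.2.1 l, x.2.2.2.1, !x.2.2.2.2)

lemma linked_iff (ev : ∀ i, Fin (c (i + 1)) → Fin (c i) → F) (x y : Vert c t r F) :
    Linked ev x y ↔ y = nb ev x y.1 := by
  obtain ⟨a, b, g, d, σ⟩ := y
  constructor
  · rintro ⟨h1, h2, h3, h4⟩
    simp only at h1 h2 h3 h4
    simp only [nb, Prod.mk.injEq, true_and]
    refine ⟨funext fun l => ?_, funext fun l => ?_, h3.symm, h4⟩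
    · rw [← h2 l]; abel
    · rw [← h1 l]; abel
  · intro h
    simp only [nb, Prod.mk.injEq, true_and] at h
    obtain ⟨rfl, rfl, rfl, rfl⟩ := h
    refine ⟨fun l => ?_, fun l => ?_, rfl, rfl⟩ <;> simp

lemma card_nbrs (ev : ∀ i, Fin (c (i + 1)) → Fin (c i) → F) (x : Vert c t r F)
    (Q : Vert c t r F → Prop) :
    (univ.filter fun y => Linked ev x y ∧ Q y).card = (univ.filter fun a => Q (nb ev x a)).card := by
  have : (univ.filter fun y => Linked ev x y ∧ Q y) =
      (univ.filter fun a => Q (nb ev x a)).image (nb ev x) := by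
    ext y
    simp only [mem_filter, mem_univ, true_and, mem_image]
    constructor
    · rintro ⟨h1, h2⟩
      have h := (linked_iff ev x y).1 h1
      exact ⟨y.1, h ▸ h2, h.symm⟩
    · rintro ⟨a, h1, rfl⟩
      exact ⟨(linked_iff ev x _).2 rfl, h1⟩
  rw [this, card_image_of_injective]
  intro a a' h
  exact congrArg Prod.fst h

/-- The coordinate `a j` is equidistributed. -/
lemma card_coord_mem (j : Fin (t + 1)) (B : Finset (Fin (c j))) :
    (univ.filter fun a : Coords c t => a j ∈ B).card * c j =
      B.card * Fintype.card (Coords c t) := by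
  have h : (univ.filter fun a : Coords c t => a j ∈ B) =
      Fintype.piFinset (Function.update (fun k : Fin (t + 1) => (univ : Finset (Fin (c k)))) j B) := by
    ext a
    simp only [mem_filter, mem_univ, true_and, Fintype.mem_piFinset]
    rw [Function.forall_update_iff (p := fun k s => a k ∈ s)]
    simp
  rw [h, Fintype.card_piFinset, Fintype.card_pi, ← Finset.mul_prod_erase _ _ (mem_univ j),
    ← Finset.mul_prod_erase univ (fun k : Fin (t + 1) => Fintype.card (Fin (c k))) (mem_univ j)]
  have h2 : ∏ k ∈ univ.erase j,
      (Function.update (fun k : Fin (t + 1) => (univ : Finset (Fin (c k)))) j B k).card =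
      ∏ k ∈ univ.erase j, Fintype.card (Fin (c k)) := by
    refine Finset.prod_congr rfl fun k hk => ?_
    rw [Function.update_of_ne (ne_of_mem_erase hk), card_univ]
  rw [h2, Function.update_self, Fintype.card_fin]
  ring

/-- The visible coordinates `a 1, …, a i`; the others are replaced by `none`, so that the type does
not depend on `i`. The coordinate `a 0` is never included. -/
def trunc (i : ℕ) (x : Vert c t r F) (j : Fin (t + 1)) : Option (Fin (c j)) :=
  if 1 ≤ j.val ∧ j.val ≤ i then some (x.1 j) else none

lemma trunc_eq_iff {i : ℕ} {x y : Vert c t r F} :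
    trunc i x = trunc i y ↔ ∀ j : Fin (t + 1), 1 ≤ j.val → j.val ≤ i → x.1 j = y.1 j := by
  constructor
  · intro h j h1 h2
    have := congrFun h j
    simpa [trunc, h1, h2] using this
  · intro h
    funext j
    unfold trunc
    split_ifs with hj
    · rw [h j hj.1 hj.2]
    · rfl

/-- The coordinates of bounded range: `a 0`, the masks, `d` and the side. -/
def hiddenPart (x : Vert c t r F) : Fin (c 0) × Rest t r F := (x.1 0, x.2)

/-- If `a (l + 1)` differs at `x` and `x'` for some `l ≤ i`, and `y ~ x` and `y' ~ x'` share
`a 0, …, a i` and the masks, then the two code words differ by the constant `b_x l - b_x' l` at the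
position `a_y l`. By the choice of the code this happens for at most a quarter of the neighbours of `x`. -/
lemma separation {ev : ∀ i, Fin (c (i + 1)) → Fin (c i) → F} (hc : ∀ i, 0 < c i)
    (hev : ∀ i a a', a ≠ a' → ∀ k, 4 * (univ.filter fun u => ev i a u - ev i a' u = k).card ≤ c i)
    {i : ℕ} {x x' : Vert c t r F} (hne : trunc (i + 1) x ≠ trunc (i + 1) x') :
    4 * (univ.filter fun y => Linked ev x y ∧
      ∃ y', trunc i y' = trunc i y ∧ hiddenPart y' = hiddenPart y ∧ Linked ev x' y').card ≤
      Fintype.card (Coords c t) := by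
  rw [card_nbrs]
  rw [Ne, trunc_eq_iff] at hne
  push Not at hne
  obtain ⟨j, hj1, hj2, hj⟩ := hne
  obtain ⟨l, rfl⟩ := Fin.exists_succ_eq.2 (show j ≠ 0 by rintro rfl; simp at hj1)
  set B : Finset (Fin (c l)) := univ.filter fun u =>
    ev l (x.1 l.succ) u - ev l (x'.1 l.succ) u = x.2.1 l - x'.2.1 l with hB
  have hBc : 4 * B.card ≤ c l := hev l _ _ hj _
  have hsub : (univ.filter fun a => ∃ y', trunc i y' = trunc i (nb ev x a) ∧
      hiddenPart y' = hiddenPart (nb ev x a) ∧ Linked ev x' y') ⊆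
      univ.filter fun a : Coords c t => a l.castSucc ∈ B := by
    intro a ha
    obtain ⟨y', h1, h2, h3⟩ := (mem_filter.1 ha).2
    refine mem_filter.2 ⟨mem_univ _, mem_filter.2 ⟨mem_univ _, ?_⟩⟩
    have hal : y'.1 l.castSucc = a l.castSucc := by
      rcases Nat.eq_zero_or_pos l.val with h0 | h0
      · have : l.castSucc = 0 := Fin.ext h0
        rw [this]
        exact (Prod.mk.inj h2).1
      · refine trunc_eq_iff.1 h1 _ h0 ?_
        simp only [Fin.val_succ] at hj2
        simp only [Fin.val_castSucc]
        omega
    have hr : y'.2 = (nb ev x a).2 := (Prod.mk.inj h2).2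
    have e1 := h3.1 l
    have e2 := ((linked_iff ev x (nb ev x a)).2 rfl).1 l
    rw [hal, hr] at e1
    change _ = ev l (x.1 l.succ) (a l.castSucc) at e2
    rw [← e1, ← e2]
    abel
  have h1 := card_coord_mem (c := c) (t := t) l.castSucc B
  have h2 := card_le_card hsub
  simp only [Fin.val_castSucc] at h1
  have h3 := hc l
  refine Nat.le_of_mul_le_mul_right ?_ h3
  calc _ ≤ 4 * (univ.filter fun a : Coords c t => a l.castSucc ∈ B).card * c l := by gcongr
    _ = 4 * B.card * Fintype.card (Coords c t) := by rw [mul_assoc, h1, mul_assoc]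
    _ ≤ c l * Fintype.card (Coords c t) := by gcongr
    _ = _ := mul_comm _ _

lemma card_trunc_fiber (ht : 1 ≤ t) (k : ∀ j : Fin (t + 1), Option (Fin (c j))) :
    (univ.filter fun x : Vert c t r F => trunc t x = k).card * c t ≤
      Fintype.card (Vert c t r F) := by
  rcases (univ.filter fun x : Vert c t r F => trunc t x = k).eq_empty_or_nonempty with h | ⟨x₀, hx₀⟩
  · rw [h]; simp
  have hk := (mem_filter.1 hx₀).2
  have hsub : (univ.filter fun x : Vert c t r F => trunc t x = k) ⊆
      (univ.filter fun a : Coords c t => a (Fin.last t) ∈ ({x₀.1 (Fin.last t)} : Finset _)) ×ˢ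
        (univ : Finset (Rest t r F)) := by
    intro x hx
    have hx' := (mem_filter.1 hx).2
    refine mem_product.2 ⟨mem_filter.2 ⟨mem_univ _, mem_singleton.2 ?_⟩, mem_univ _⟩
    exact trunc_eq_iff.1 (hx'.trans hk.symm) _ ht le_rfl
  have h1 := card_coord_mem (c := c) (t := t) (Fin.last t) {x₀.1 (Fin.last t)}
  have h2 := card_le_card hsub
  rw [card_product, card_univ] at h2
  rw [card_singleton, one_mul] at h1
  rw [Fintype.card_prod, ← h1]
  calc _ ≤ _ * c t := Nat.mul_le_mul_right _ h2
    _ = _ := by simp only [Fin.val_last]; ring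

lemma card_filter_equiv {α β : Type*} [Fintype α] [Fintype β] (e : α ≃ β) (Q : β → Prop)
    [DecidablePred Q] :
    (univ.filter fun x => Q (e x)).card = (univ.filter Q).card := by
  refine Finset.card_bij (fun x _ => e x) ?_ ?_ ?_
  · intro x hx; simpa using hx
  · intro x _ y _ h; exact e.injective h
  · intro y hy; exact ⟨e.symm y, by simpa using hy, by simp⟩

/-- The graph of the construction: it has `D · 2 ^ s` vertices and is `D`-regular, where
`D = c 0 ⋯ c t`, and every regular partition of a small modification has at least `c t / 32` parts. -/
lemma exists_graph {ev : ∀ i, Fin (c (i + 1)) → Fin (c i) → F} (hF : Fintype.card F = 256)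
    (hc0 : c 0 = 20) (hcpos : ∀ i, 0 < c i)
    (hev : ∀ i a a', a ≠ a' → ∀ k, 4 * (univ.filter fun u => ev i a u - ev i a' u = k).card ≤ c i)
    {s : ℕ} (ht : 1 ≤ t) (hr : 16 * t + r + 1 = s) {p : ℝ} (hp : p = 1 / 2 ^ s) :
    ∃ (n : ℕ) (G : SimpleGraph (Fin n)),
      G.Colorable 2 ∧ graphDensity G = p ∧
      ∀ G' : SimpleGraph (Fin n),
        ((symmDiff G.edgeSet G'.edgeSet).ncard : ℝ) ≤ 1 / 64 * G.edgeSet.ncard →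
        ∀ Z : Finpartition (univ : Finset (Fin n)),
          IsRegularPartitionW G' (p ^ 5) Z → c t ≤ 32 * Z.parts.card := by
  obtain ⟨n, ⟨e⟩⟩ : ∃ n, Nonempty (Fin n ≃ Vert c t r F) :=
    ⟨_, ⟨(Fintype.equivFin _).symm⟩⟩
  set D := Fintype.card (Coords c t) with hD
  have hDpos : 0 < D := by
    rw [hD, Fintype.card_pi]
    exact Finset.prod_pos fun j _ => by rw [Fintype.card_fin]; exact hcpos _
  have hrest : Fintype.card (Rest t r F) = 2 ^ s := by
    simp only [Fintype.card_prod, Fintype.card_fun, hF, Fintype.card_fin, Fintype.card_bool]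
    rw [← hr, show 256 = 2 ^ 8 by norm_num, ← pow_mul, ← pow_succ, ← pow_add, ← pow_add]
    congr 1; ring
  have hn : n = D * 2 ^ s := by
    rw [← hrest, hD, ← Fintype.card_prod, ← Fintype.card_congr e, Fintype.card_fin]
  have hp0 : 0 < p := by rw [hp]; positivity
  have h2s : (2 : ℝ) ^ s * p = 1 := by rw [hp]; field_simp
  have hDp : (D : ℝ) = p * n := by
    rw [hn]; push_cast; linear_combination -(D : ℝ) * h2s
  let G : SimpleGraph (Fin n) :=
    { Adj := fun x y => Linked ev (e x) (e y)
      symm := ⟨fun x y h => h.symm⟩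
      loopless := ⟨fun x h => by simpa using h.2.2.2⟩ }
  have hreg : ∀ x, (univ.filter fun y => G.Adj x y).card = D := by
    intro x
    have h1 := card_filter_equiv e (fun y => Linked ev (e x) y)
    have h2 := card_nbrs ev (e x) (fun _ => True)
    simp only [and_true, filter_true, card_univ] at h2
    exact h1.trans h2
  have hedge : 2 * (G.edgeSet.ncard : ℝ) = n * D := by
    rw [two_mul_ncard_edgeSet]
    have : ∀ x, ∑ y, adjR G x y = D := by
      intro x; unfold adjR; rw [← hreg x]; simp
    simp [this]
  have hn0 : (n : ℝ) ≠ 0 := by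
    rw [hn]; positivity
  have hsep : ∀ i < t, ∀ x x', (e x).2.2.2.2 = (e x').2.2.2.2 →
      trunc (i + 1) (e x) ≠ trunc (i + 1) (e x') →
      4 * (univ.filter fun y => G.Adj x y ∧ ∃ y', trunc i (e y') = trunc i (e y) ∧
        hiddenPart (e y') = hiddenPart (e y) ∧ G.Adj x' y').card ≤ D := by
    intro i _ x x' _ hne
    have h := separation hcpos hev hne
    rw [← card_filter_equiv e] at h
    refine le_trans (Nat.mul_le_mul_left 4 (card_le_card fun y hy => ?_)) h
    obtain ⟨h1, y', h2⟩ := (mem_filter.1 hy).2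
    exact mem_filter.2 ⟨mem_univ _, h1, e y', h2⟩
  refine ⟨n, G, ?_, ?_, ?_⟩
  · have hcol : G.Coloring Bool := SimpleGraph.Coloring.mk (fun x => (e x).2.2.2.2) <| by
      intro x y h heq
      have h4 : (e y).2.2.2.2 = !(e x).2.2.2.2 := h.2.2.2
      rw [heq] at h4
      exact (Bool.eq_not_self _).1 h4
    exact hcol.colorable
  · unfold graphDensity
    rw [hedge, Fintype.card_fin, hDp]
    field_simp
  intro G' hG' Z hZ
  have hmain := parts_bound (P := Z) (G := G) (G' := G') (p := p) (D := D) (t := t)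
    (S := fun x => (e x).2.2.2.2) (part := fun i x => trunc i (e x))
    (hid := fun x => hiddenPart (e x)) (m := n / c t)
    hp0 ?_ hDpos ?_ ?_ ?_ ?_ ?_ ?_ hreg (by convert hsep) ?_ hZ ?_
  · rw [Fintype.card_fin] at hmain
    have h1 : n / c t * c t ≤ n := Nat.div_mul_le_self _ _
    have hnpos : 0 < n := Nat.pos_of_ne_zero (by exact_mod_cast hn0)
    have h2 : c t ≤ 32 * Z.parts.card := by
      refine Nat.le_of_mul_le_mul_left ?_ hnpos
      calc n * c t ≤ Z.parts.card * (32 * (n / c t)) * c t := by gcongr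
        _ = 32 * Z.parts.card * (n / c t * c t) := by ring
        _ ≤ 32 * Z.parts.card * n := by gcongr
        _ = _ := mul_comm _ _
    exact h2
  · rw [hp]
    refine one_div_le_one_div_of_le (by norm_num) ?_
    calc (1000 : ℝ) ≤ 2 ^ 10 := by norm_num
      _ ≤ 2 ^ s := pow_le_pow_right₀ (by norm_num) (by omega)
  · rw [Fintype.card_fin]; exact hDp
  · rw [Fintype.card_prod, hrest, Fintype.card_fin]
    rw [hc0]
    push_cast
    linear_combination 20 * h2s
  · rw [← h2s]
    gcongr
    have : t < 2 ^ t := Nat.lt_two_pow_self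
    have h2 : 2 ^ t ≤ 2 ^ s := Nat.pow_le_pow_right (by norm_num) (by omega)
    exact_mod_cast this.le.trans h2
  · intro x y
    exact trunc_eq_iff.2 fun j h1 h2 => by omega
  · intro i x y h
    exact trunc_eq_iff.2 fun j h1 h2 => trunc_eq_iff.1 h j h1 (by omega)
  · intro x y h
    exact congrArg (fun q => q.2.2.2.2) h
  · intro k
    have h := card_trunc_fiber (r := r) (F := F) ht k
    rw [← card_filter_equiv e, ← Fintype.card_congr e, Fintype.card_fin] at h
    rw [Nat.le_div_iff_mul_le (hcpos t)]
    convert h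
  · rw [sum_dif_eq, Fintype.card_fin, ← hedge]
    linarith

end Construction

/-- **Lower bound for the sparse regular approximation lemma (SRAL).**
There are absolute constants `δ₀, c > 0` such that for every even `s ≥ 400`, with `p = 2^{-s}`,
there is a bipartite graph `G` of density `p` such that: for every graph `G'` obtained from `G`
by adding/removing at most `δ₀|E(G)|` edges and every `p⁵`-regular (not necessarily equitable)
partition `Z` of its vertex set, the order of `Z` is at least `twr(c·log₂(1/p))`. -/
theorem sral_lower_bound :
    ∃ δ₀ c : ℝ, 0 < δ₀ ∧ 0 < c ∧
      ∀ s : ℕ, Even s → 400 ≤ s →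
      ∀ p : ℝ, p = 1 / 2 ^ s →
      ∃ (n : ℕ) (G : SimpleGraph (Fin n)),
        G.Colorable 2 ∧ graphDensity G = p ∧
        ∀ G' : SimpleGraph (Fin n),
          ((symmDiff G.edgeSet G'.edgeSet).ncard : ℝ) ≤ δ₀ * G.edgeSet.ncard →
          ∀ Z : Finpartition (univ : Finset (Fin n)),
            IsRegularPartitionW G' (p ^ 5) Z →
            twr ⌊c * Real.logb 2 (1 / p)⌋₊ ≤ Z.parts.card := by
  refine ⟨1 / 64, 1 / 32, by norm_num, by norm_num, ?_⟩
  intro s _ hs p hp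
  have hfloor : ⌊(1 / 32 : ℝ) * Real.logb 2 (1 / p)⌋₊ = s / 32 := by
    rw [hp, one_div_one_div, Real.logb_pow, Real.logb_self_eq_one (by norm_num), mul_one,
      one_div_mul_eq_div]
    exact_mod_cast Nat.floor_div_eq_div (K := ℝ) s 32
  rw [hfloor]
  obtain ⟨t, ht⟩ : ∃ t, t = s / 32 := ⟨_, rfl⟩
  obtain ⟨r, hr⟩ : ∃ r, 16 * t + r + 1 = s := ⟨s - 1 - 16 * t, by omega⟩
  rw [← ht]
  have hcpos : ∀ i, 0 < codeSize i := fun i => by have := codeSize_ge i; omega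
  -- any abelian group with 256 elements will do
  obtain ⟨F, _, _, hF⟩ : ∃ (F : Type) (_ : AddCommGroup F) (_ : Fintype F),
      Fintype.card F = 256 := ⟨Fin 8 → ZMod 2, inferInstance, inferInstance, by
        rw [Fintype.card_fun, ZMod.card, Fintype.card_fin]; norm_num⟩
  have hcode : ∀ i, ∃ ev : Fin (codeSize (i + 1)) → Fin (codeSize i) → F, ∀ a a', a ≠ a' → ∀ k,
      4 * (univ.filter fun u => ev a u - ev a' u = k).card ≤ codeSize i := fun i =>
    exists_code hF (by have := codeSize_ge i; omega)
  choose ev hev using hcode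
  obtain ⟨n, G, h1, h2, h3⟩ := exists_graph hF rfl hcpos hev (by omega) hr hp
  refine ⟨n, G, h1, h2, fun G' hG' Z hZ => ?_⟩
  have h4 := h3 G' hG' Z hZ
  obtain ⟨t', rfl⟩ : ∃ t', t = t' + 1 := ⟨t - 1, by omega⟩
  have := codeSize_succ_ge t'
  omega
end

section
/- For every graph H on h vertices there is a constant C = C(H) such that for every ε ∈ (0,1) and every n-vertex graph G the following holds: if G cannot be made H-free by deleting fewer than εn² edges, then G contains at least n^h / twr(C·⌈log₂(1/ε)⌉) copies of H (i.e., at least that many injective maps V(H) → V(G) that map edges of H to edges of G). -/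
/-!
The proof follows the entropy-increment approach to the removal lemma.

The assumption on `G` yields a subgraph `G₀` with at least `ε n²` ordered adjacent pairs such that
destroying all copies of `H` in `G₀` requires deleting a constant proportion of its edges
(`exists_core`; think of the union of a maximal family of edge-disjoint copies). Let `f` be the
indicator of adjacency in `G₀`, `d ≥ ε` its mean and `m` the number of edges of `H`.

For a partition `P` of the vertex set, let `f_P` be the average of `f` over products of parts, and
consider the entropy `∑ f_P log f_P`. It is at least `n² d log d` by Jensen (`entropy_lower`), at
most `0` since `f_P ≤ 1` (`entropy_upper`), and grows under refinement (`entropy_refine`).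

Suppose `G₀` has few homomorphic copies of `H`. Given `P`, take a weakly (cut-norm) regular
refinement `Q`, with exponentially many parts (`weak_regularity`). Delete the edges in pairs of
`P`-parts that are sparse, or involve a small part, or where `f_Q ≤ f_P / 4` on a `1 / (2m)`
proportion of the pair. A surviving copy of `H` would, by a union bound and the counting lemma
(`counting`, `many_homs`), give many homomorphic copies, so none survives, and the deleted edges are
a constant proportion of all edges. The first two kinds of edges are few, so a constant proportion
lies in pairs of the third kind, on which the entropy grows substantially: by `n² d / (64 m²)`
altogether (`step`).

So there are at most `64 m² log (1 / d) + 1` steps, each costing four levels of the tower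
(`homs_lower`). Finally all but `h² n^(h-1)` of the maps are injective, which turns homomorphisms
into copies unless `n` is so small that one copy is already enough (`copies_lower`).
-/

open Finset
open scoped Classical

/-- The number of copies of `H` in `G`, i.e. of injective maps `V(H) → V(G)` that map
edges of `H` to edges of `G`. -/
noncomputable def copyCount {α β : Type*} (H : SimpleGraph α) (G : SimpleGraph β) : ℕ :=
  Nat.card {f : α → β // Function.Injective f ∧ ∀ ⦃a b : α⦄, H.Adj a b → G.Adj (f a) (f b)}

/-! ### Conditional expectation on a finite set -/

/-- The average of `f` over the fibre of `p` through `z`. -/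
noncomputable def cexp {X κ : Type*} [Fintype X] (p : X → κ) (f : X → ℝ) (z : X) : ℝ :=
  (∑ z' with p z' = p z, f z') / #{z' | p z' = p z}

section Cexp

variable {X κ κ' : Type*} [Fintype X] {p : X → κ} {q : X → κ'} {f u : X → ℝ}

lemma fibre_card_pos (p : X → κ) (z : X) : (0 : ℝ) < #{z' | p z' = p z} := by
  exact_mod_cast Finset.card_pos.2 ⟨z, by simp⟩

lemma cexp_congr (f : X → ℝ) {z w : X} (h : p z = p w) : cexp p f z = cexp p f w := by
  simp [cexp, h]

lemma cexp_nonneg (hf : ∀ z, 0 ≤ f z) (z : X) : 0 ≤ cexp p f z :=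
  div_nonneg (Finset.sum_nonneg fun _ _ => hf _) (by positivity)

lemma cexp_le_one (hf : ∀ z, f z ≤ 1) (z : X) : cexp p f z ≤ 1 := by
  rw [cexp, div_le_one (fibre_card_pos p z)]
  calc _ ≤ ∑ z' with p z' = p z, (1 : ℝ) := Finset.sum_le_sum fun _ _ => hf _
    _ = _ := by simp

/-- The defining property of conditional expectation: `f` and `cexp p f` have the same
correlation with every `p`-measurable function. -/
lemma sum_mul_cexp (f : X → ℝ) (hu : ∀ z w, p z = p w → u z = u w) :
    ∑ z, u z * cexp p f z = ∑ z, u z * f z := by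
  have h1 : ∀ z, u z * cexp p f z
      = ∑ w, if p w = p z then u w * f w / #{z' | p z' = p w} else 0 := by
    intro z
    rw [cexp, Finset.sum_filter, ← mul_div_assoc, Finset.mul_sum, Finset.sum_div]
    refine Finset.sum_congr rfl fun w _ => ?_
    split_ifs with h
    · rw [hu w z h, h]
    · simp
  simp_rw [h1]
  rw [Finset.sum_comm]
  refine Finset.sum_congr rfl fun w _ => ?_
  rw [← Finset.sum_filter, Finset.sum_const, nsmul_eq_mul]
  have h2 : (#{z' | p w = p z'} : ℝ) = #{z' | p z' = p w} := by
    simp_rw [eq_comm]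
  rw [h2]
  have := fibre_card_pos p w
  field_simp

lemma sum_cexp (p : X → κ) (f : X → ℝ) : ∑ z, cexp p f z = ∑ z, f z := by
  simpa using sum_mul_cexp (p := p) (u := fun _ => 1) f (fun _ _ _ => rfl)

lemma sum_mul_cexp_refine (f : X → ℝ) (hqp : ∀ z w, q z = q w → p z = p w)
    (hu : ∀ z w, p z = p w → u z = u w) :
    ∑ z, u z * cexp q f z = ∑ z, u z * cexp p f z := by
  rw [sum_mul_cexp f hu, sum_mul_cexp f fun z w h => hu z w (hqp z w h)]

/-- Pythagoras for conditional expectations. -/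
lemma energy_refine (f : X → ℝ) (hqp : ∀ z w, q z = q w → p z = p w) :
    ∑ z, cexp q f z ^ 2 = ∑ z, cexp p f z ^ 2 + ∑ z, (cexp q f z - cexp p f z) ^ 2 := by
  have h := sum_mul_cexp_refine (u := cexp p f) f hqp fun z w h => cexp_congr f h
  have h2 : ∑ z, (cexp q f z - cexp p f z) ^ 2 = ∑ z, cexp q f z ^ 2
      - 2 * ∑ z, cexp p f z * cexp q f z + ∑ z, cexp p f z * cexp p f z := by
    rw [Finset.mul_sum, ← Finset.sum_sub_distrib, ← Finset.sum_add_distrib]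
    exact Finset.sum_congr rfl fun _ _ => by ring
  have h3 : ∑ z, cexp p f z ^ 2 = ∑ z, cexp p f z * cexp p f z :=
    Finset.sum_congr rfl fun _ _ => by ring
  rw [h2, h3, h]; ring

/-! ### Entropy -/

/-- The divergence `y log (y/x) - y + x` is nonnegative. -/
lemma divergence_nonneg {x y : ℝ} (hx : 0 ≤ x) (hy : 0 ≤ y) (hxy : x = 0 → y = 0) :
    0 ≤ y * Real.log y - y * Real.log x - y + x := by
  rcases hy.eq_or_lt with rfl | hy
  · simpa using hx
  have hx : 0 < x := lt_of_le_of_ne hx fun h => hy.ne' (hxy h.symm)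
  have h := Real.log_le_sub_one_of_pos (div_pos hx hy)
  rw [Real.log_div hx.ne' hy.ne'] at h
  have h2 := mul_le_mul_of_nonneg_left h hy.le
  have h3 : y * (x / y - 1) = x - y := by field_simp
  linarith

/-- If `y ≤ x/4` the divergence `y log (y/x) - y + x` is a constant proportion of `x`. -/
lemma divergence_large {x y : ℝ} (hx : 0 ≤ x) (hy : 0 ≤ y) (hyx : y ≤ x / 4) :
    x / 4 ≤ y * Real.log y - y * Real.log x - y + x := by
  rcases hy.eq_or_lt with rfl | hy
  · simp; linarith
  have hx : 0 < x := by linarith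
  -- the tangent line at `y = x/4`: compare `y log (4y/x) ≥ y - x/4`
  have h := Real.log_le_sub_one_of_pos (show 0 < x / (4 * y) by positivity)
  rw [Real.log_div hx.ne' (by positivity), Real.log_mul (by norm_num) hy.ne'] at h
  have h2 := mul_le_mul_of_nonneg_left h hy.le
  have h3 : y * (x / (4 * y) - 1) = x / 4 - y := by field_simp
  have h4 : Real.log 4 = 2 * Real.log 2 := by
    rw [show (4 : ℝ) = 2 ^ 2 by norm_num, Real.log_pow]; norm_num
  have h5 := Real.log_two_lt_d9
  have h6 : y * Real.log 4 ≤ y * 1.5 := mul_le_mul_of_nonneg_left (by linarith) hy.le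
  nlinarith

lemma cexp_eq_zero_of_refine (hf : ∀ z, 0 ≤ f z) (hqp : ∀ z w, q z = q w → p z = p w) {z : X}
    (h : cexp p f z = 0) : cexp q f z = 0 := by
  rw [cexp, div_eq_zero_iff] at h
  have h := h.resolve_right (fibre_card_pos p z).ne'
  rw [Finset.sum_eq_zero_iff_of_nonneg fun _ _ => hf _] at h
  rw [cexp, Finset.sum_eq_zero, zero_div]
  intro w hw
  exact h w (by simpa using hqp w z (by simpa using hw))

/-- Refining the partition `p` to `q` increases the entropy `∑ f log f` of the averaged function
by the total divergence, in particular by a constant proportion of the mass of `f` on the set where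
the averaged density drops by a factor of four. -/
lemma entropy_refine (hf : ∀ z, 0 ≤ f z) (hqp : ∀ z w, q z = q w → p z = p w) :
    ∑ z, cexp p f z * Real.log (cexp p f z)
      + (∑ z, cexp p f z * if cexp q f z ≤ cexp p f z / 4 then 1 else 0) / 4
      ≤ ∑ z, cexp q f z * Real.log (cexp q f z) := by
  have h := sum_mul_cexp_refine (u := fun z => Real.log (cexp p f z)) f hqp
    fun z w h => by simp only [cexp_congr f h]
  have hs : ∑ z, cexp q f z = ∑ z, cexp p f z := by rw [sum_cexp, sum_cexp]
  have key : ∑ z, (cexp p f z * if cexp q f z ≤ cexp p f z / 4 then 1 else 0) / 4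
      ≤ ∑ z, (cexp q f z * Real.log (cexp q f z) - Real.log (cexp p f z) * cexp q f z
        - cexp q f z + cexp p f z) := by
    refine Finset.sum_le_sum fun z _ => ?_
    rw [mul_comm (Real.log _)]
    split_ifs with hz
    · simpa using divergence_large (cexp_nonneg hf z) (cexp_nonneg hf z) hz
    · simpa using divergence_nonneg (cexp_nonneg hf z) (cexp_nonneg hf z)
        (cexp_eq_zero_of_refine hf hqp)
  rw [Finset.sum_add_distrib, Finset.sum_sub_distrib, Finset.sum_sub_distrib, h, hs,
    ← Finset.sum_div] at key
  simp_rw [mul_comm (Real.log _)] at key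
  linarith

/-- Jensen: the entropy of any averaged function is at least that of the constant function. -/
lemma entropy_lower (hf : ∀ z, 0 ≤ f z) {d : ℝ} (hd : 0 < d)
    (hsum : ∑ z, f z = d * Fintype.card X) :
    d * Real.log d * Fintype.card X ≤ ∑ z, cexp p f z * Real.log (cexp p f z) := by
  have key : ∑ z : X, (0 : ℝ) ≤ ∑ z, (cexp p f z * Real.log (cexp p f z)
      - cexp p f z * Real.log d - cexp p f z + d) :=
    Finset.sum_le_sum fun z _ =>
      divergence_nonneg hd.le (cexp_nonneg hf z) fun h => absurd h hd.ne'
  rw [Finset.sum_add_distrib, Finset.sum_sub_distrib, Finset.sum_sub_distrib, ← Finset.sum_mul,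
    sum_cexp, hsum] at key
  simp at key
  nlinarith

lemma entropy_upper (hf : ∀ z, 0 ≤ f z) (hf1 : ∀ z, f z ≤ 1) :
    ∑ z, cexp p f z * Real.log (cexp p f z) ≤ 0 :=
  Finset.sum_nonpos fun z _ => mul_nonpos_of_nonneg_of_nonpos (cexp_nonneg hf z)
    (Real.log_nonpos (cexp_nonneg hf z) (cexp_le_one hf1 z))

end Cexp

/-! ### Weak regularity -/

/-- The partition of `Ω × Ω` into products of parts of the partition `P` of `Ω`. -/
def sqp {Ω ι : Type*} (P : Ω → ι) (z : Ω × Ω) : ι × ι := (P z.1, P z.2)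

/-- Weak (cut-norm) regularity of the partition `P` with respect to the kernel `f`. -/
def WeakReg {Ω ι : Type*} [Fintype Ω] (P : Ω → ι) (f : Ω × Ω → ℝ) (η : ℝ) : Prop :=
  ∀ A B : Finset Ω, |∑ z ∈ A ×ˢ B, (f z - cexp (sqp P) f z)| ≤ η * (Fintype.card Ω : ℝ) ^ 2

lemma sqp_refine {Ω ι ι' : Type*} {P : Ω → ι} {Q : Ω → ι'} (h : ∀ x y, Q x = Q y → P x = P y)
    (z w : Ω × Ω) (hz : sqp Q z = sqp Q w) : sqp P z = sqp P w := by
  simp only [sqp, Prod.mk.injEq] at hz ⊢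
  exact ⟨h _ _ hz.1, h _ _ hz.2⟩

/-- A partition failing weak regularity has a refinement, by the two sets that witness the failure,
of larger energy. -/
lemma weak_step {Ω ι : Type} [Fintype Ω] [Fintype ι] (P : Ω → ι) (f : Ω × Ω → ℝ) {η : ℝ}
    (hη : 0 < η) (hP : ¬ WeakReg P f η) :
    ∃ (ι' : Type) (_ : Fintype ι') (Q : Ω → ι'), (∀ x y, Q x = Q y → P x = P y) ∧
      Fintype.card ι' = Fintype.card ι * 4 ∧
      ∑ z, cexp (sqp P) f z ^ 2 + η ^ 2 * (Fintype.card Ω : ℝ) ^ 2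
        ≤ ∑ z, cexp (sqp Q) f z ^ 2 := by
  simp only [WeakReg, not_forall, not_le] at hP
  obtain ⟨A, B, hAB⟩ := hP
  refine ⟨ι × Bool × Bool, inferInstance, fun x => (P x, decide (x ∈ A), decide (x ∈ B)), ?_, ?_, ?_⟩
  · intro x y h
    exact (Prod.mk.inj h).1
  · simp
  set Q : Ω → ι × Bool × Bool := fun x => (P x, decide (x ∈ A), decide (x ∈ B)) with hQ
  have hr : ∀ x y, Q x = Q y → P x = P y := fun x y h => (Prod.mk.inj h).1
  rw [energy_refine f (sqp_refine hr)]
  gcongr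
  have h1 : ∑ z ∈ A ×ˢ B, (f z - cexp (sqp P) f z)
      = ∑ z ∈ A ×ˢ B, (cexp (sqp Q) f z - cexp (sqp P) f z) := by
    have h := sum_mul_cexp (p := sqp Q) (u := fun z => if z ∈ A ×ˢ B then 1 else 0) f (by
      intro z w h
      simp only [sqp, hQ, Prod.mk.injEq, decide_eq_decide] at h
      simp only [Finset.mem_product, h.1.2.1, h.2.2.2])
    simp only [ite_mul, one_mul, zero_mul, ← Finset.sum_filter, Finset.filter_mem_eq_inter,
      Finset.univ_inter] at h
    rw [Finset.sum_sub_distrib, Finset.sum_sub_distrib, h]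
  rw [h1] at hAB
  have h2 := sq_sum_le_card_mul_sum_sq (s := A ×ˢ B)
    (f := fun z => cexp (sqp Q) f z - cexp (sqp P) f z)
  have h3 : (#(A ×ˢ B) : ℝ) ≤ (Fintype.card Ω : ℝ) ^ 2 := by
    have := Finset.card_le_univ (A ×ˢ B)
    rw [Fintype.card_prod, ← sq] at this
    exact_mod_cast this
  have h4 : ∑ z ∈ A ×ˢ B, (cexp (sqp Q) f z - cexp (sqp P) f z) ^ 2
      ≤ ∑ z, (cexp (sqp Q) f z - cexp (sqp P) f z) ^ 2 :=
    Finset.sum_le_sum_of_subset_of_nonneg (Finset.subset_univ _) fun _ _ _ => sq_nonneg _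
  have h5 : (η * (Fintype.card Ω : ℝ) ^ 2) ^ 2
      ≤ (∑ z ∈ A ×ˢ B, (cexp (sqp Q) f z - cexp (sqp P) f z)) ^ 2 := by
    rw [← sq_abs (∑ z ∈ A ×ˢ B, _)]
    gcongr
  rcases Nat.eq_zero_or_pos (Fintype.card Ω) with h0 | h0
  · rw [h0]; simp; exact Finset.sum_nonneg fun _ _ => sq_nonneg _
  have hn : (0 : ℝ) < (Fintype.card Ω : ℝ) ^ 2 := by positivity
  have h6 : (η * (Fintype.card Ω : ℝ) ^ 2) ^ 2 ≤
      (Fintype.card Ω : ℝ) ^ 2 * ∑ z, (cexp (sqp Q) f z - cexp (sqp P) f z) ^ 2 :=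
    h5.trans (h2.trans (mul_le_mul h3 h4 (Finset.sum_nonneg fun _ _ => sq_nonneg _) hn.le))
  refine le_of_mul_le_mul_left ?_ hn
  linarith

/-- The weak regularity lemma: every partition has a weakly regular refinement, with a number
of parts exponential in `η⁻²`. -/
lemma weak_regularity {Ω ι : Type} [Fintype Ω] [Nonempty Ω] [Fintype ι] (P : Ω → ι)
    (f : Ω × Ω → ℝ) (hf : ∀ z, 0 ≤ f z) (hf1 : ∀ z, f z ≤ 1) {η : ℝ} (hη : 0 < η) {N : ℕ}
    (hN : 1 < N * η ^ 2) :
    ∃ (ι' : Type) (_ : Fintype ι') (Q : Ω → ι'), (∀ x y, Q x = Q y → P x = P y) ∧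
      Fintype.card ι' ≤ Fintype.card ι * 4 ^ N ∧ WeakReg Q f η := by
  by_contra hcon
  push Not at hcon
  have key : ∀ j ≤ N, ∃ (ι' : Type) (_ : Fintype ι') (Q : Ω → ι'),
      (∀ x y, Q x = Q y → P x = P y) ∧ Fintype.card ι' ≤ Fintype.card ι * 4 ^ j ∧
      j * η ^ 2 * (Fintype.card Ω : ℝ) ^ 2 ≤ ∑ z, cexp (sqp Q) f z ^ 2 := by
    intro j
    induction j with
    | zero =>
      exact fun _ => ⟨ι, inferInstance, P, fun _ _ h => h, by simp, by
        simp; exact Finset.sum_nonneg fun _ _ => sq_nonneg _⟩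
    | succ j ih =>
      intro hj
      obtain ⟨ι', _, Q, hQ, hc, he⟩ := ih (by omega)
      obtain ⟨ι'', _, R, hR, hc', he'⟩ := weak_step Q f hη (hcon ι' inferInstance Q hQ
        (hc.trans (Nat.mul_le_mul_left _ (Nat.pow_le_pow_right (by norm_num) (by omega)))))
      refine ⟨ι'', inferInstance, R, fun x y h => hQ _ _ (hR _ _ h), ?_, ?_⟩
      · rw [hc', pow_succ, ← mul_assoc]
        exact Nat.mul_le_mul_right _ hc
      · push_cast
        linarith
  obtain ⟨ι', _, Q, -, -, he⟩ := key N le_rfl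
  have h1 : ∑ z, cexp (sqp Q) f z ^ 2 ≤ (Fintype.card Ω : ℝ) ^ 2 := by
    calc _ ≤ ∑ z : Ω × Ω, (1 : ℝ) := Finset.sum_le_sum fun z _ =>
          pow_le_one₀ (cexp_nonneg hf z) (cexp_le_one hf1 z)
      _ = _ := by simp [pow_two]
  have hn : (0 : ℝ) < (Fintype.card Ω : ℝ) ^ 2 := by
    have := Fintype.card_pos (α := Ω); positivity
  nlinarith

lemma sum_le_of_rect {Ω : Type*} [Fintype Ω] (g : Ω × Ω → ℝ) {c : ℝ}
    (hg : ∀ A B : Finset Ω, ∑ z ∈ A ×ˢ B, g z ≤ c) {u w : Ω → ℝ}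
    (hu : ∀ x, 0 ≤ u x ∧ u x ≤ 1) (hw : ∀ x, 0 ≤ w x ∧ w x ≤ 1) :
    ∑ x, ∑ y, u x * w y * g (x, y) ≤ c := by
  -- a sum `∑ u a` with `0 ≤ u ≤ 1` is largest when `u` is the indicator of `{a > 0}`
  have ext : ∀ (a v : Ω → ℝ), (∀ x, 0 ≤ v x ∧ v x ≤ 1) →
      ∑ x, v x * a x ≤ ∑ x with 0 < a x, a x := by
    intro a v hv
    rw [Finset.sum_filter]
    refine Finset.sum_le_sum fun x _ => ?_
    split_ifs with h
    · nlinarith [hv x]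
    · nlinarith [hv x]
  calc ∑ x, ∑ y, u x * w y * g (x, y) = ∑ x, u x * ∑ y, w y * g (x, y) := by
        simp_rw [Finset.mul_sum, mul_assoc]
    _ ≤ ∑ x with 0 < ∑ y, w y * g (x, y), ∑ y, w y * g (x, y) := ext _ _ hu
    _ = ∑ y, w y * ∑ x with 0 < ∑ y, w y * g (x, y), g (x, y) := by
        rw [Finset.sum_comm]; simp_rw [Finset.mul_sum]
    _ ≤ _ := ext _ _ hw
    _ ≤ c := by
        rw [Finset.sum_comm, ← Finset.sum_product']; exact hg _ _

/-- Weak regularity controls correlations with products of `[0,1]`-valued functions. -/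
lemma WeakReg.abs_sum_le {Ω ι : Type*} [Fintype Ω] {P : Ω → ι} {f : Ω × Ω → ℝ} {η : ℝ}
    (h : WeakReg P f η) {u w : Ω → ℝ}
    (hu : ∀ x, 0 ≤ u x ∧ u x ≤ 1) (hw : ∀ x, 0 ≤ w x ∧ w x ≤ 1) :
    |∑ x, ∑ y, u x * w y * (cexp (sqp P) f (x, y) - f (x, y))| ≤ η * (Fintype.card Ω : ℝ) ^ 2 := by
  rw [abs_le]
  have h1 := sum_le_of_rect (fun z => f z - cexp (sqp P) f z)
    (fun A B => (abs_le.1 (h A B)).2) hu hw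
  have h2 := sum_le_of_rect (c := η * (Fintype.card Ω : ℝ) ^ 2)
    (fun z => cexp (sqp P) f z - f z) (fun A B => by
    have := (abs_le.1 (h A B)).1
    rw [Finset.sum_sub_distrib] at this ⊢
    linarith) hu hw
  refine ⟨?_, h2⟩
  have h3 : ∑ x, ∑ y, u x * w y * (cexp (sqp P) f (x, y) - f (x, y))
      = - ∑ x, ∑ y, u x * w y * (f (x, y) - cexp (sqp P) f (x, y)) := by
    simp_rw [← Finset.sum_neg_distrib]
    exact Finset.sum_congr rfl fun _ _ => Finset.sum_congr rfl fun _ _ => by ring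
  rw [h3]
  linarith

/-! ### Counting homomorphisms -/

section Counting

variable {α Ω : Type}

/-- Resampling one coordinate of a uniformly random point of a product set does not change
the average. -/
lemma sum_update [Fintype α] (V : α → Finset Ω) (a : α) (K : (α → Ω) → ℝ) :
    ∑ x ∈ Fintype.piFinset V, ∑ s ∈ V a, K (Function.update x a s)
      = #(V a) * ∑ x ∈ Fintype.piFinset V, K x := by
  have h : (#(V a) : ℝ) * ∑ x ∈ Fintype.piFinset V, K x
      = ∑ x ∈ Fintype.piFinset V, ∑ s ∈ V a, K x := by
    simp [Finset.mul_sum]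
  rw [h, ← Finset.sum_product', ← Finset.sum_product']
  have hmem : ∀ y ∈ Fintype.piFinset V ×ˢ V a,
      (Function.update y.1 a y.2, y.1 a) ∈ Fintype.piFinset V ×ˢ V a := by
    rintro ⟨x, s⟩ hx
    simp only [Finset.mem_product, Fintype.mem_piFinset] at hx ⊢
    refine ⟨fun c => ?_, hx.1 a⟩
    rcases eq_or_ne c a with rfl | hc
    · simpa using hx.2
    · simpa [hc] using hx.1 c
  refine Finset.sum_nbij' (fun y => (Function.update y.1 a y.2, y.1 a))
    (fun y => (Function.update y.1 a y.2, y.1 a)) hmem hmem ?_ ?_ ?_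
  · rintro ⟨x, s⟩ _; simp
  · rintro ⟨x, s⟩ _; simp
  · rintro ⟨x, s⟩ _; simp

lemma sum_update₂ [Fintype α] (V : α → Finset Ω) (a b : α) (K : (α → Ω) → ℝ) :
    ∑ x ∈ Fintype.piFinset V, ∑ s ∈ V a, ∑ t ∈ V b,
        K (Function.update (Function.update x a s) b t)
      = #(V a) * #(V b) * ∑ x ∈ Fintype.piFinset V, K x := by
  rw [sum_update V a (fun x => ∑ t ∈ V b, K (Function.update x b t)), sum_update V b K, mul_assoc]

/-- `W` splits, as a function of the two coordinates `a` and `b` alone, as a product of two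
`[0,1]`-valued functions, one of each coordinate. -/
def PairSep (a b : α) (W : (α → Ω) → ℝ) : Prop :=
  ∀ x, ∃ u w : Ω → ℝ, (∀ s, 0 ≤ u s ∧ u s ≤ 1) ∧ (∀ s, 0 ≤ w s ∧ w s ≤ 1) ∧
    ∀ s t, W (Function.update (Function.update x a s) b t) = u s * w t

lemma PairSep.prod {a b : α} {ι : Type*} (E : Finset ι) (W : ι → (α → Ω) → ℝ)
    (hW : ∀ e ∈ E, PairSep a b (W e)) : PairSep a b (fun x => ∏ e ∈ E, W e x) := by
  intro x
  choose! u w hu hw h using fun e he => hW e he x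
  refine ⟨fun s => ∏ e ∈ E, u e s, fun s => ∏ e ∈ E, w e s, fun s => ⟨?_, ?_⟩,
    fun s => ⟨?_, ?_⟩, fun s t => ?_⟩
  · exact Finset.prod_nonneg fun e he => (hu e he s).1
  · exact Finset.prod_le_one (fun e he => (hu e he s).1) fun e he => (hu e he s).2
  · exact Finset.prod_nonneg fun e he => (hw e he s).1
  · exact Finset.prod_le_one (fun e he => (hw e he s).1) fun e he => (hw e he s).2
  · rw [← Finset.prod_mul_distrib]
    exact Finset.prod_congr rfl fun e he => h e he s t

lemma sep_edge {a b c d : α} (F : Ω × Ω → ℝ) (hF : ∀ z, 0 ≤ F z ∧ F z ≤ 1)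
    (hcd : c ≠ d) (h1 : ¬ (c = a ∧ d = b)) (h2 : ¬ (c = b ∧ d = a)) :
    PairSep a b (fun x : α → Ω => F (x c, x d)) := by
  intro x
  have one : ∀ s : Ω, (0 : ℝ) ≤ (fun _ : Ω => (1 : ℝ)) s ∧ (fun _ : Ω => (1 : ℝ)) s ≤ 1 :=
    fun s => by norm_num
  by_cases hb : c = b ∨ d = b
  · -- the factor depends on the coordinate `b` but not on `a`
    refine ⟨fun _ => 1, fun t => F (Function.update x b t c, Function.update x b t d), one,
      fun t => hF _, fun s t => ?_⟩
    have hc : c = b ∨ c ≠ a := by grind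
    have hd : d = b ∨ d ≠ a := by grind
    simp only [Function.update_apply, one_mul]
    grind
  · refine ⟨fun s => F (Function.update x a s c, Function.update x a s d), fun _ => 1,
      fun t => hF _, one, fun s t => ?_⟩
    simp only [Function.update_apply, mul_one]
    grind

variable [Fintype α] [Fintype Ω]

/-- Replacing one factor `f` by its average over a weakly regular partition changes a
homomorphism count by little. -/
lemma swap_edge {ι : Type*} {Q : Ω → ι} {f : Ω × Ω → ℝ} {η : ℝ} (hQ : WeakReg Q f η)
    (V : α → Finset Ω) {a b : α} (hab : a ≠ b) {W : (α → Ω) → ℝ} (hW : PairSep a b W) :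
    #(V a) * #(V b) * |∑ x ∈ Fintype.piFinset V,
        W x * (cexp (sqp Q) f (x a, x b) - f (x a, x b))|
      ≤ η * (Fintype.card Ω : ℝ) ^ 2 * #(Fintype.piFinset V) := by
  rw [← abs_of_nonneg (show (0 : ℝ) ≤ #(V a) * #(V b) by positivity), ← abs_mul,
    ← sum_update₂ V a b]
  refine (Finset.abs_sum_le_sum_abs _ _).trans ?_
  rw [mul_comm, ← nsmul_eq_mul]
  refine Finset.sum_le_card_nsmul _ _ _ fun x _ => ?_
  obtain ⟨u, w, hu, hw, h⟩ := hW x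
  have h3 := hQ.abs_sum_le (u := fun s => if s ∈ V a then u s else 0)
    (w := fun s => if s ∈ V b then w s else 0)
    (fun s => by split_ifs; exacts [hu s, by norm_num])
    (fun s => by split_ifs; exacts [hw s, by norm_num])
  refine le_of_eq_of_le ?_ h3
  congr 1
  symm
  rw [← Finset.sum_subset (Finset.subset_univ (V a)) (fun s _ hs => by simp [hs])]
  refine Finset.sum_congr rfl fun s hs => ?_
  rw [← Finset.sum_subset (Finset.subset_univ (V b)) (fun t _ ht => by simp [ht])]
  refine Finset.sum_congr rfl fun t ht => ?_
  rw [h]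
  simp [hs, ht, Function.update_of_ne hab]

/-- The counting lemma (lower bound): the density of homomorphisms with vertex classes `V` is not
much less than the density computed from the averaged kernel. Swapping the edges one at a time, each
swap costs at most `η / κ ^ 2`. -/
lemma counting {ι : Type*} {Q : Ω → ι} {f : Ω × Ω → ℝ} {η κ : ℝ} (hQ : WeakReg Q f η)
    (hf : ∀ z, 0 ≤ f z) (hf1 : ∀ z, f z ≤ 1) (hη : 0 ≤ η) (hκ : 0 < κ) [Nonempty Ω]
    (V : α → Finset Ω) (hV : ∀ a, κ * Fintype.card Ω ≤ #(V a)) (E : Finset (α × α))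
    (hE : ∀ e ∈ E, e.1 ≠ e.2 ∧ (e.2, e.1) ∉ E) :
    ∑ x ∈ Fintype.piFinset V, ∏ e ∈ E, cexp (sqp Q) f (x e.1, x e.2)
      ≤ ∑ x ∈ Fintype.piFinset V, ∏ e ∈ E, f (x e.1, x e.2)
        + #E * (η / κ ^ 2) * #(Fintype.piFinset V) := by
  have hn : (0 : ℝ) < Fintype.card Ω := by exact_mod_cast Fintype.card_pos
  have key : ∀ S ⊆ E, ∑ x ∈ Fintype.piFinset V,
      ∏ e ∈ E, (if e ∈ S then cexp (sqp Q) f (x e.1, x e.2) else f (x e.1, x e.2))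
      ≤ ∑ x ∈ Fintype.piFinset V, ∏ e ∈ E, f (x e.1, x e.2)
        + #S * (η / κ ^ 2) * #(Fintype.piFinset V) := by
    intro S
    induction S using Finset.induction_on with
    | empty => simp
    | insert e S he ih =>
      intro hS
      have heE : e ∈ E := hS (Finset.mem_insert_self _ _)
      have ih := ih fun x hx => hS (Finset.mem_insert_of_mem hx)
      have hsep : PairSep e.1 e.2 (fun x : α → Ω => ∏ e' ∈ E.erase e,
          (if e' ∈ S then cexp (sqp Q) f (x e'.1, x e'.2) else f (x e'.1, x e'.2))) := by
        refine PairSep.prod _ _ fun e' he' => ?_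
        have he'E := Finset.mem_of_mem_erase he'
        have h1 : ¬ (e'.1 = e.1 ∧ e'.2 = e.2) := fun h =>
          Finset.ne_of_mem_erase he' (Prod.ext h.1 h.2)
        have h2 : ¬ (e'.1 = e.2 ∧ e'.2 = e.1) := fun h => by
          apply (hE e heE).2
          rw [← h.1, ← h.2]; exact he'E
        split_ifs
        · exact sep_edge _ (fun z => ⟨cexp_nonneg hf z, cexp_le_one hf1 z⟩) (hE e' he'E).1 h1 h2
        · exact sep_edge _ (fun z => ⟨hf z, hf1 z⟩) (hE e' he'E).1 h1 h2
      have hsw := swap_edge hQ V (hE e heE).1 hsep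
      have hdiff : ∑ x ∈ Fintype.piFinset V, ∏ e' ∈ E, (if e' ∈ insert e S
            then cexp (sqp Q) f (x e'.1, x e'.2) else f (x e'.1, x e'.2))
          - ∑ x ∈ Fintype.piFinset V, ∏ e' ∈ E, (if e' ∈ S
            then cexp (sqp Q) f (x e'.1, x e'.2) else f (x e'.1, x e'.2))
          = ∑ x ∈ Fintype.piFinset V, (∏ e' ∈ E.erase e, (if e' ∈ S
            then cexp (sqp Q) f (x e'.1, x e'.2) else f (x e'.1, x e'.2)))
            * (cexp (sqp Q) f (x e.1, x e.2) - f (x e.1, x e.2)) := by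
        rw [← Finset.sum_sub_distrib]
        refine Finset.sum_congr rfl fun x _ => ?_
        rw [← Finset.mul_prod_erase E _ heE, ← Finset.mul_prod_erase E _ heE, mul_sub,
          if_pos (Finset.mem_insert_self _ _), if_neg he]
        rw [mul_comm (f _), mul_comm (cexp _ _ _)]
        congr 2
        refine Finset.prod_congr rfl fun e' he' => ?_
        simp [Finset.mem_insert, Finset.ne_of_mem_erase he']
      rw [← hdiff] at hsw
      have hle := le_trans (mul_le_mul_of_nonneg_left (le_abs_self _) (by positivity)) hsw
      rw [Finset.card_insert_of_notMem he]
      push_cast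
      set D := ∑ x ∈ Fintype.piFinset V, ∏ e' ∈ E, (if e' ∈ insert e S
            then cexp (sqp Q) f (x e'.1, x e'.2) else f (x e'.1, x e'.2))
          - ∑ x ∈ Fintype.piFinset V, ∏ e' ∈ E, (if e' ∈ S
            then cexp (sqp Q) f (x e'.1, x e'.2) else f (x e'.1, x e'.2)) with hD
      have hDle : D ≤ η / κ ^ 2 * #(Fintype.piFinset V) := by
        rcases le_or_gt D 0 with h0 | h0
        · exact h0.trans (by positivity)
        have h5 : κ * Fintype.card Ω * (κ * Fintype.card Ω) * D
            ≤ #(V e.1) * #(V e.2) * D := by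
          gcongr <;> apply hV
        have h6 := h5.trans hle
        rw [div_mul_eq_mul_div, le_div_iff₀ (by positivity)]
        refine le_of_mul_le_mul_right ?_ (show (0 : ℝ) < (Fintype.card Ω : ℝ) ^ 2 by positivity)
        linarith
      linarith
  have := key E subset_rfl
  refine le_of_eq_of_le ?_ this
  refine Finset.sum_congr rfl fun x _ => Finset.prod_congr rfl fun e he => ?_
  rw [if_pos he]

/-- If the averaged kernel is at least `τ` on most of every `V a × V b`, `(a, b) ∈ E`, then there
are many homomorphisms. -/
lemma many_homs {ι : Type*} {Q : Ω → ι} {f : Ω × Ω → ℝ} {η κ τ : ℝ} (hQ : WeakReg Q f η)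
    (hf : ∀ z, 0 ≤ f z) (hf1 : ∀ z, f z ≤ 1) (hη : 0 ≤ η) (hκ : 0 < κ) [Nonempty Ω]
    (V : α → Finset Ω) (hV : ∀ a, κ * Fintype.card Ω ≤ #(V a)) (E : Finset (α × α))
    (hE : ∀ e ∈ E, e.1 ≠ e.2 ∧ (e.2, e.1) ∉ E) (hτ : 0 ≤ τ)
    (hbad : ∀ e ∈ E, ∑ s ∈ V e.1, ∑ t ∈ V e.2, (if cexp (sqp Q) f (s, t) < τ then (1 : ℝ) else 0)
      ≤ #(V e.1) * #(V e.2) / (2 * #E))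
    (hητ : #E * (η / κ ^ 2) ≤ τ ^ #E / 4) :
    τ ^ #E / 4 * (κ * Fintype.card Ω) ^ Fintype.card α
      ≤ ∑ x : α → Ω, ∏ e ∈ E, f (x e.1, x e.2) := by
  have hn : (0 : ℝ) < Fintype.card Ω := by exact_mod_cast Fintype.card_pos
  have hVpos : ∀ a, (0 : ℝ) < #(V a) := fun a => lt_of_lt_of_le (by positivity) (hV a)
  have hcount := counting hQ hf hf1 hη hκ V hV E hE
  -- the number of `x` with a bad pair at the edge `e`
  have hbad' : ∀ e ∈ E, ∑ x ∈ Fintype.piFinset V,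
      (if cexp (sqp Q) f (x e.1, x e.2) < τ then (1 : ℝ) else 0)
      ≤ #(Fintype.piFinset V) / (2 * #E) := by
    intro e he
    have h := sum_update₂ V e.1 e.2
      (fun x => if cexp (sqp Q) f (x e.1, x e.2) < τ then (1 : ℝ) else 0)
    simp only [Function.update_self, Function.update_of_ne (hE e he).1] at h
    have h2 := Finset.sum_le_card_nsmul (Fintype.piFinset V) _ _ fun x _ => hbad e he
    rw [h, nsmul_eq_mul] at h2
    refine le_of_mul_le_mul_left (h2.trans_eq ?_) (mul_pos (hVpos e.1) (hVpos e.2))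
    ring
  have hpt : ∀ x : α → Ω, τ ^ #E * (1 - ∑ e ∈ E,
      (if cexp (sqp Q) f (x e.1, x e.2) < τ then (1 : ℝ) else 0))
      ≤ ∏ e ∈ E, cexp (sqp Q) f (x e.1, x e.2) := by
    intro x
    by_cases hx : ∃ e ∈ E, cexp (sqp Q) f (x e.1, x e.2) < τ
    · obtain ⟨e, he, hlt⟩ := hx
      have h1 : (1 : ℝ) ≤ ∑ e ∈ E,
          (if cexp (sqp Q) f (x e.1, x e.2) < τ then (1 : ℝ) else 0) := by
        refine le_trans ?_ (Finset.single_le_sum (fun e _ => ?_) he)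
        · simp [hlt]
        · split_ifs <;> norm_num
      refine le_trans (mul_nonpos_of_nonneg_of_nonpos (by positivity) (by linarith)) ?_
      exact Finset.prod_nonneg fun e _ => cexp_nonneg hf _
    · push Not at hx
      rw [Finset.sum_eq_zero fun e he => if_neg (not_lt.2 (hx e he)), sub_zero, mul_one,
        ← Finset.prod_const]
      exact Finset.prod_le_prod (fun _ _ => hτ) hx
  have hsum := Finset.sum_le_sum fun x (_ : x ∈ Fintype.piFinset V) => hpt x
  rw [← Finset.mul_sum, Finset.sum_sub_distrib, Finset.sum_comm] at hsum
  have hb := Finset.sum_le_card_nsmul E _ _ hbad'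
  simp only [Finset.sum_const, nsmul_eq_mul, mul_one] at hb hsum
  have hb2 : (#E : ℝ) * (#(Fintype.piFinset V) / (2 * #E)) ≤ #(Fintype.piFinset V) / 2 := by
    rcases Nat.eq_zero_or_pos #E with h0 | h0
    · rw [h0, Nat.cast_zero, zero_mul]
      exact div_nonneg (Nat.cast_nonneg _) zero_le_two
    · have : (0 : ℝ) < #E := by exact_mod_cast h0
      apply le_of_eq; field_simp
  have hpow : τ ^ #E * (#(Fintype.piFinset V) / 2) ≤ ∑ x ∈ Fintype.piFinset V,
      ∏ e ∈ E, cexp (sqp Q) f (x e.1, x e.2) :=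
    le_trans (mul_le_mul_of_nonneg_left (by linarith) (by positivity)) hsum
  have hcard : (κ * Fintype.card Ω) ^ Fintype.card α ≤ #(Fintype.piFinset V) := by
    rw [Fintype.card_piFinset, Nat.cast_prod, ← Finset.card_univ (α := α), ← Finset.prod_const]
    exact Finset.prod_le_prod (fun _ _ => by positivity) fun a _ => hV a
  have hsub : ∑ x ∈ Fintype.piFinset V, ∏ e ∈ E, f (x e.1, x e.2)
      ≤ ∑ x : α → Ω, ∏ e ∈ E, f (x e.1, x e.2) :=
    Finset.sum_le_sum_of_subset_of_nonneg (Finset.subset_univ _) fun _ _ _ =>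
      Finset.prod_nonneg fun _ _ => hf _
  have h7 := mul_le_mul_of_nonneg_right hητ
    (show (0 : ℝ) ≤ #(Fintype.piFinset V) by positivity)
  have h8 := mul_le_mul_of_nonneg_left hcard (show 0 ≤ τ ^ #E / 4 by positivity)
  linarith

/-- All but a `h² / n` proportion of all maps are injective. -/
lemma noninjective_card :
    (#{x : α → Ω | ¬ Function.Injective x} : ℝ) * Fintype.card Ω
      ≤ (Fintype.card α : ℝ) ^ 2 * (Fintype.card Ω : ℝ) ^ Fintype.card α := by
  have h1 : (#{x : α → Ω | ¬ Function.Injective x} : ℝ)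
      ≤ ∑ e : α × α, ∑ x : α → Ω, if e.1 ≠ e.2 ∧ x e.1 = x e.2 then (1 : ℝ) else 0 := by
    rw [Finset.sum_comm, Finset.card_filter, Nat.cast_sum]
    refine Finset.sum_le_sum fun x _ => ?_
    by_cases hx : ¬ Function.Injective x
    · rw [if_pos hx, Nat.cast_one]
      simp only [Function.Injective, not_forall] at hx
      obtain ⟨a, b, h, hne⟩ := hx
      refine le_trans ?_ (Finset.single_le_sum (fun e _ => ?_) (Finset.mem_univ (a, b)))
      · simp [h, hne]
      · split_ifs <;> norm_num
    · rw [if_neg hx, Nat.cast_zero]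
      exact Finset.sum_nonneg fun e _ => by split_ifs <;> norm_num
  have h2 : ∀ e : α × α, (Fintype.card Ω : ℝ) *
      (∑ x : α → Ω, if e.1 ≠ e.2 ∧ x e.1 = x e.2 then (1 : ℝ) else 0)
      ≤ (Fintype.card Ω : ℝ) ^ Fintype.card α := by
    intro e
    by_cases he : e.1 = e.2
    · simp [he]
    have h := sum_update (fun _ : α => (Finset.univ : Finset Ω)) e.1
      (fun x => if e.1 ≠ e.2 ∧ x e.1 = x e.2 then (1 : ℝ) else 0)
    simp only [Fintype.piFinset_univ, Finset.card_univ] at h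
    rw [← h]
    simp [Function.update_of_ne (Ne.symm he), he]
  calc _ ≤ (∑ e : α × α, ∑ x : α → Ω, if e.1 ≠ e.2 ∧ x e.1 = x e.2 then (1 : ℝ) else 0)
        * Fintype.card Ω := by gcongr
    _ = ∑ e : α × α, (Fintype.card Ω : ℝ) *
        (∑ x : α → Ω, if e.1 ≠ e.2 ∧ x e.1 = x e.2 then (1 : ℝ) else 0) := by
        rw [Finset.sum_mul]; exact Finset.sum_congr rfl fun _ _ => mul_comm _ _
    _ ≤ ∑ e : α × α, (Fintype.card Ω : ℝ) ^ Fintype.card α :=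
        Finset.sum_le_sum fun e _ => h2 e
    _ = _ := by simp [pow_two]

end Counting

/-! ### One refinement step -/

section Step

variable {α Ω : Type}

/-- The indicator function of adjacency. -/
noncomputable def ind (G : SimpleGraph Ω) (z : Ω × Ω) : ℝ := if G.Adj z.1 z.2 then 1 else 0

/-- `G` has no injective image of the graph with (oriented) edge set `E`. -/
def Free (E : Finset (α × α)) (G : SimpleGraph Ω) : Prop :=
  ¬ ∃ x : α → Ω, Function.Injective x ∧ ∀ e ∈ E, G.Adj (x e.1) (x e.2)

lemma ind_nonneg (G : SimpleGraph Ω) (z : Ω × Ω) : 0 ≤ ind G z := by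
  unfold ind; split_ifs <;> norm_num

lemma ind_le_one (G : SimpleGraph Ω) (z : Ω × Ω) : ind G z ≤ 1 := by
  unfold ind; split_ifs <;> norm_num

lemma ind_swap (G : SimpleGraph Ω) (z : Ω × Ω) : ind G z.swap = ind G z := by
  simp [ind, G.adj_comm]

variable [Fintype Ω]

lemma cexp_sqp {ι : Type*} (P : Ω → ι) (g : Ω × Ω → ℝ) (x y : Ω) :
    cexp (sqp P) g (x, y) = (∑ s with P s = P x, ∑ t with P t = P y, g (s, t))
      / (#{s | P s = P x} * #{t | P t = P y}) := by
  -- stated for every decidability instance, since `ι × ι` carries two of them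
  have h : ∀ I : DecidablePred fun z : Ω × Ω => sqp P z = sqp P (x, y),
      @Finset.filter _ (fun z : Ω × Ω => sqp P z = sqp P (x, y)) I Finset.univ
        = ({s | P s = P x} : Finset Ω) ×ˢ ({t | P t = P y} : Finset Ω) := by
    intro _; ext z; simp [sqp]
  rw [cexp, h, Finset.sum_product, Finset.card_product, Nat.cast_mul]

/-- Few vertices lie in small parts. -/
lemma small_parts {ι : Type*} [Fintype ι] (P : Ω → ι) {c : ℝ} (hc : 0 ≤ c) :
    ∑ x, (if (#{s | P s = P x} : ℝ) < c then (1 : ℝ) else 0) ≤ Fintype.card ι * c := by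
  rw [← Finset.sum_fiberwise Finset.univ P]
  have : ∀ i ∈ (Finset.univ : Finset ι), ∑ x with P x = i,
      (if (#{s | P s = P x} : ℝ) < c then (1 : ℝ) else 0) ≤ c := by
    intro i _
    have h : ∑ x with P x = i, (if (#{s | P s = P x} : ℝ) < c then (1 : ℝ) else 0)
        = ∑ x with P x = i, (if (#{s | P s = i} : ℝ) < c then (1 : ℝ) else 0) :=
      Finset.sum_congr rfl fun x hx => by rw [(Finset.mem_filter.1 hx).2]
    rw [h, Finset.sum_const, nsmul_eq_mul]
    split_ifs with h
    · rw [mul_one]; exact h.le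
    · rw [mul_zero]; exact hc
  simpa using Finset.sum_le_card_nsmul _ _ _ this

set_option maxHeartbeats 1000000 in
/-- If `G` contains few homomorphic copies of the graph with edge set `E`, yet a constant proportion
of its edges has to be deleted to destroy all injective copies, then every partition `P`
has a refinement `Q` gaining entropy proportional to the edge density `d` of `G`.

Here `Q` is a weakly regular refinement. Deleting the edges of `G` in small parts of `P`, in sparse
pairs of parts, and in pairs of parts where `Q` has many subpairs of density below a quarter of the
density of the pair leaves, by the counting lemma, no copy. The first two kinds are few, so a
constant proportion of the edges is of the third kind. -/
lemma step [Fintype α] [Nonempty Ω] {ι : Type} [Fintype ι] (G : SimpleGraph Ω)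
    (E : Finset (α × α)) (hE : ∀ e ∈ E, e.1 ≠ e.2 ∧ (e.2, e.1) ∉ E) (hm : 0 < #E)
    {T : ℕ} {d : ℝ} (hd : ∑ z, ind G z = d * (Fintype.card Ω : ℝ) ^ 2) (hdT : 1 ≤ d * T)
    (hT : 64 * #E ≤ T)
    (hG : ∀ G' ≤ G, Free E G' → ∑ z, ind G z ≤ 2 * #E * ∑ z, (ind G z - ind G' z))
    (P : Ω → ι) (hP : Fintype.card ι ≤ T)
    (hfew : ∑ x : α → Ω, ∏ e ∈ E, ind G (x e.1, x e.2)
      < (Fintype.card Ω : ℝ) ^ Fintype.card α / (T : ℝ) ^ (3 * #E + 3 * Fintype.card α + 1)) :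
    ∃ (ι' : Type) (_ : Fintype ι') (Q : Ω → ι'),
      Fintype.card ι' ≤ T * 4 ^ (T ^ (6 * #E + 16) + 1) ∧
      ∑ z, cexp (sqp P) (ind G) z * Real.log (cexp (sqp P) (ind G) z)
        + d * (Fintype.card Ω : ℝ) ^ 2 / (64 * (#E : ℝ) ^ 2)
        ≤ ∑ z, cexp (sqp Q) (ind G) z * Real.log (cexp (sqp Q) (ind G) z) := by
  set m := #E with hmdef
  set n : ℝ := (Fintype.card Ω : ℝ) with hndef
  have hn : 0 < n := by rw [hndef]; exact_mod_cast Fintype.card_pos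
  have hm1 : (1 : ℝ) ≤ m := by exact_mod_cast hm
  have hTm : (64 : ℝ) * m ≤ T := by exact_mod_cast hT
  have hT64 : (64 : ℝ) ≤ T := by linarith
  have hT0 : (0 : ℝ) < T := by linarith
  have hf := ind_nonneg G
  have hf1 := ind_le_one G
  set κ : ℝ := 1 / (T : ℝ) ^ 3 with hκ
  set η : ℝ := 1 / (T : ℝ) ^ (3 * m + 8) with hη
  have hκ0 : 0 < κ := by positivity
  have hη0 : 0 < η := by positivity
  have hN : (1 : ℝ) < ((T ^ (6 * m + 16) + 1 : ℕ) : ℝ) * η ^ 2 := by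
    have : (T : ℝ) ^ (6 * m + 16) * η ^ 2 = 1 := by
      rw [hη, div_pow, one_pow, ← pow_mul, show (3 * m + 8) * 2 = 6 * m + 16 by ring]
      field_simp
    push_cast
    nlinarith [sq_pos_of_pos hη0]
  obtain ⟨ι', hι', Q, hQP, hcard, hQ⟩ := weak_regularity P (ind G) hf hf1 hη0 hN
  refine ⟨ι', hι', Q, hcard.trans (Nat.mul_le_mul_right _ hP), ?_⟩
  have hent := entropy_refine (f := ind G) hf (sqp_refine hQP)
  set fP := cexp (sqp P) (ind G) with hfP
  set fQ := cexp (sqp Q) (ind G) with hfQ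
  set B : Ω × Ω → ℝ := fun z => if fQ z ≤ fP z / 4 then 1 else 0 with hB
  have hB0 : ∀ z, 0 ≤ B z := fun z => by simp only [hB]; split_ifs <;> norm_num
  set good : Ω × Ω → Prop := fun z => κ * n ≤ #{s | P s = P z.1} ∧ κ * n ≤ #{s | P s = P z.2} ∧
    1 / (T : ℝ) ^ 2 ≤ fP z ∧ cexp (sqp P) B z ≤ 1 / (2 * m) with hgood
  let G' : SimpleGraph Ω :=
    { Adj := fun x y => G.Adj x y ∧ good (x, y) ∧ good (y, x)
      symm := ⟨fun x y h => ⟨h.1.symm, h.2.2, h.2.1⟩⟩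
      loopless := ⟨fun x h => G.loopless.irrefl x h.1⟩ }
  have hfree : Free E G' := by
    rintro ⟨x, -, hx⟩
    let V : α → Finset Ω := fun a =>
      if ∃ e ∈ E, a = e.1 ∨ a = e.2 then ({s | P s = P (x a)} : Finset Ω) else Finset.univ
    have hV1 : ∀ e ∈ E, V e.1 = ({s | P s = P (x e.1)} : Finset Ω) := fun e he =>
      if_pos ⟨e, he, Or.inl rfl⟩
    have hV2 : ∀ e ∈ E, V e.2 = ({s | P s = P (x e.2)} : Finset Ω) := fun e he =>
      if_pos ⟨e, he, Or.inr rfl⟩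
    have hV : ∀ a, κ * (Fintype.card Ω : ℝ) ≤ #(V a) := by
      intro a
      by_cases ha : ∃ e ∈ E, a = e.1 ∨ a = e.2
      · obtain ⟨e, he, rfl | rfl⟩ := ha
        · rw [hV1 e he]; exact (hx e he).2.1.1
        · rw [hV2 e he]; exact (hx e he).2.1.2.1
      · have : V a = Finset.univ := if_neg ha
        rw [this, Finset.card_univ]
        have : κ ≤ 1 := by
          rw [hκ, div_le_one (by positivity)]
          exact one_le_pow₀ (by linarith)
        nlinarith
    have hbad : ∀ e ∈ E, ∑ s ∈ V e.1, ∑ t ∈ V e.2, (if fQ (s, t) < κ then (1 : ℝ) else 0)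
        ≤ #(V e.1) * #(V e.2) / (2 * #E) := by
      intro e he
      obtain ⟨h1, h2, h3, h4⟩ := (hx e he).2.1
      rw [cexp_sqp] at h4
      simp only [] at h1 h2
      have hκn : 0 < κ * n := by positivity
      rw [div_le_iff₀ (mul_pos (hκn.trans_le h1) (hκn.trans_le h2))] at h4
      rw [hV1 e he, hV2 e he]
      refine le_trans (Finset.sum_le_sum fun s hs => Finset.sum_le_sum fun t ht => ?_)
        (h4.trans_eq (by ring))
      have hst : fP (s, t) = fP (x e.1, x e.2) := by
        apply cexp_congr
        simp only [sqp, (Finset.mem_filter.1 hs).2, (Finset.mem_filter.1 ht).2]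
      split_ifs with h
      · have : fQ (s, t) ≤ fP (s, t) / 4 := by
          rw [hst]
          have : κ ≤ 1 / (T : ℝ) ^ 2 / 4 := by
            rw [hκ, div_div]
            apply one_div_le_one_div_of_le (by positivity)
            nlinarith [sq_nonneg (T : ℝ)]
          linarith
        simp [hB, this]
      · exact hB0 _
    have hητ : (#E : ℝ) * (η / κ ^ 2) ≤ κ ^ #E / 4 := by
      rw [← hmdef, hη, hκ]
      have h1 : (1 : ℝ) / (T : ℝ) ^ (3 * m + 8) / (1 / (T : ℝ) ^ 3) ^ 2
          = (1 / (T : ℝ) ^ 3) ^ m / (T : ℝ) ^ 2 := by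
        rw [one_div_pow, one_div_pow, ← pow_mul, ← pow_mul, pow_add]
        field_simp
      rw [h1, ← mul_div_assoc, div_le_div_iff₀ (by positivity) (by norm_num)]
      have h2 : (m : ℝ) * 4 ≤ (T : ℝ) ^ 2 := by nlinarith
      have h3 : (0 : ℝ) < (1 / (T : ℝ) ^ 3) ^ m := by positivity
      nlinarith
    have hmany := many_homs hQ hf hf1 hη0.le hκ0 V hV E hE hκ0.le hbad hητ
    refine absurd hfew (not_lt.2 (le_trans ?_ hmany))
    rw [← hmdef, ← hndef, mul_pow, hκ, one_div_pow, one_div_pow, ← pow_mul, ← pow_mul,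
      pow_add, pow_add, pow_one, div_mul_eq_mul_div, div_le_div_iff₀ (by positivity) (by norm_num)]
    have : 1 / (T : ℝ) ^ (3 * m) * (1 / (T : ℝ) ^ (3 * Fintype.card α) * n ^ Fintype.card α)
      * ((T : ℝ) ^ (3 * m) * (T : ℝ) ^ (3 * Fintype.card α) * T) = n ^ Fintype.card α * T := by
      field_simp
    rw [this]
    gcongr
    linarith
  have hmass := hG G' (fun x y h => h.1) hfree
  set b : Ω × Ω → ℝ := fun z => if good z then 0 else 1 with hb
  have hb0 : ∀ z, 0 ≤ b z := fun z => by simp only [hb]; split_ifs <;> norm_num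
  have hpt : ∀ z, ind G z - ind G' z ≤ ind G z * b z + ind G z * b z.swap := by
    rintro ⟨x, y⟩
    by_cases h : G.Adj x y
    · by_cases h1 : good (x, y)
      · by_cases h2 : good (y, x)
        · have : G'.Adj x y := ⟨h, h1, h2⟩
          simp [ind, h, this, hb, h1, h2]
        · have := hb0 (x, y)
          have h3 := ind_nonneg G' (x, y)
          have h4 : b (y, x) = 1 := if_neg h2
          have h5 : ind G (x, y) = 1 := if_pos h
          simp only [Prod.swap_prod_mk, h4, h5]
          linarith
      · have := hb0 (y, x)
        have h3 := ind_nonneg G' (x, y)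
        have h4 : b (x, y) = 1 := if_neg h1
        have h5 : ind G (x, y) = 1 := if_pos h
        simp only [Prod.swap_prod_mk, h4, h5]
        linarith
    · have h5 : ind G (x, y) = 0 := if_neg h
      have h3 := ind_nonneg G' (x, y)
      simp only [h5]
      linarith
  have hsw : ∑ z, ind G z * b z.swap = ∑ z, ind G z * b z := by
    rw [← Equiv.sum_comp (Equiv.prodComm Ω Ω)]
    exact Finset.sum_congr rfl fun z _ => by
      simp only [Equiv.prodComm_apply, Prod.swap_swap, ind_swap]
  have hmass2 : d * n ^ 2 ≤ 4 * m * ∑ z, ind G z * b z := by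
    have h1 := Finset.sum_le_sum fun z (_ : z ∈ Finset.univ) => hpt z
    rw [Finset.sum_add_distrib, hsw] at h1
    rw [hd] at hmass
    nlinarith
  -- the four reasons for a pair not to be good
  have hpt2 : ∀ z : Ω × Ω, ind G z * b z
      ≤ (if (#{s | P s = P z.1} : ℝ) < κ * n then (1 : ℝ) else 0)
        + (if (#{s | P s = P z.2} : ℝ) < κ * n then (1 : ℝ) else 0)
        + (if fP z < 1 / (T : ℝ) ^ 2 then (1 : ℝ) else 0) * ind G z
        + (if 1 / (2 * m) < cexp (sqp P) B z then (1 : ℝ) else 0) * ind G z := by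
    intro z
    have h0 := hf z
    have h1 := hf1 z
    by_cases hz : good z
    · simp only [hb, if_pos hz, mul_zero]
      positivity
    · simp only [hb, if_neg hz, mul_one]
      simp only [hgood, not_and_or, not_le] at hz
      rcases hz with h | h | h | h <;> rw [if_pos h] <;> split_ifs <;> linarith
  have hs1 : ∑ z : Ω × Ω, (if (#{s | P s = P z.1} : ℝ) < κ * n then (1 : ℝ) else 0)
      ≤ T * (κ * n) * n := by
    rw [Fintype.sum_prod_type]
    simp only [Finset.sum_const, Finset.card_univ, nsmul_eq_mul]
    rw [← Finset.mul_sum, mul_comm]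
    have := small_parts P (c := κ * n) (by positivity)
    have h2 : (Fintype.card ι : ℝ) ≤ T := by exact_mod_cast hP
    gcongr
    exact this.trans (by gcongr)
  have hs2 : ∑ z : Ω × Ω, (if (#{s | P s = P z.2} : ℝ) < κ * n then (1 : ℝ) else 0)
      ≤ T * (κ * n) * n := by
    rw [← Equiv.sum_comp (Equiv.prodComm Ω Ω)]
    exact hs1
  have hs3 : ∑ z : Ω × Ω, (if fP z < 1 / (T : ℝ) ^ 2 then (1 : ℝ) else 0) * ind G z
      ≤ 1 / (T : ℝ) ^ 2 * n ^ 2 := by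
    rw [← sum_mul_cexp (p := sqp P) (ind G) fun z w h => by rw [hfP, cexp_congr _ h]]
    have : ∀ z ∈ (Finset.univ : Finset (Ω × Ω)),
        (if fP z < 1 / (T : ℝ) ^ 2 then (1 : ℝ) else 0) * fP z ≤ 1 / (T : ℝ) ^ 2 := by
      intro z _
      split_ifs with h
      · rw [one_mul]; exact h.le
      · rw [zero_mul]; positivity
    have := Finset.sum_le_card_nsmul _ _ _ this
    refine this.trans_eq ?_
    rw [nsmul_eq_mul, Finset.card_univ, Fintype.card_prod, Nat.cast_mul, ← hndef]
    ring
  have hs4 : ∑ z : Ω × Ω, (if 1 / (2 * m) < cexp (sqp P) B z then (1 : ℝ) else 0) * ind G z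
      ≤ 2 * m * ∑ z, fP z * B z := by
    rw [← sum_mul_cexp (p := sqp P) (ind G) fun z w h => by rw [cexp_congr _ h],
      ← sum_mul_cexp (p := sqp P) (u := fP) B fun z w h => cexp_congr _ h, Finset.mul_sum]
    refine Finset.sum_le_sum fun z _ => ?_
    have h1 : 0 ≤ fP z := cexp_nonneg hf z
    have h2 : 0 ≤ cexp (sqp P) B z := cexp_nonneg hB0 z
    split_ifs with h
    · rw [div_lt_iff₀ (by positivity)] at h
      change 1 * fP z ≤ _
      nlinarith
    · rw [zero_mul]; positivity
  have htot := Finset.sum_le_sum fun z (_ : z ∈ Finset.univ) => hpt2 z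
  rw [Finset.sum_add_distrib, Finset.sum_add_distrib, Finset.sum_add_distrib] at htot
  have hTκ : (T : ℝ) * (κ * n) * n = 1 / (T : ℝ) ^ 2 * n ^ 2 := by
    rw [hκ]; field_simp
  rw [hTκ] at hs1 hs2
  set S := ∑ z, fP z * B z with hS
  have hS' : d * n ^ 2 ≤ 4 * m * (3 * (1 / (T : ℝ) ^ 2 * n ^ 2) + 2 * m * S) :=
    hmass2.trans (mul_le_mul_of_nonneg_left (by linarith) (by positivity))
  have hd2 : 24 * m * (1 / (T : ℝ) ^ 2) ≤ d := by
    rw [mul_one_div, div_le_iff₀ (by positivity)]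
    nlinarith
  have hd3 := mul_le_mul_of_nonneg_right hd2 (sq_nonneg n)
  have hfin : d * n ^ 2 ≤ 16 * (m : ℝ) ^ 2 * S := by nlinarith
  have hgain : d * n ^ 2 / (64 * (m : ℝ) ^ 2) ≤ S / 4 := by
    rw [div_le_div_iff₀ (by positivity) (by norm_num)]
    linarith
  linarith

end Step

/-! ### Towers -/

lemma twr_succ (x : ℕ) : twr (x + 1) = 2 ^ twr x := rfl

lemma twr_strictMono : StrictMono twr :=
  strictMono_nat_of_lt_succ fun n => by rw [twr_succ]; exact Nat.lt_two_pow_self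

lemma lt_twr (x : ℕ) : x < twr x := by
  induction x with
  | zero => simp [twr]
  | succ n ih => exact lt_of_le_of_lt ih (twr_strictMono (Nat.lt_succ_self n))

lemma sq_le_two_pow {T : ℕ} (hT : 4 ≤ T) : T * T ≤ 2 ^ T := by
  induction T, hT using Nat.le_induction with
  | base => norm_num
  | succ n hn ih => rw [pow_succ]; nlinarith

lemma twr_pow_self {x : ℕ} (hx : 4 ≤ twr x) : twr x ^ twr x ≤ twr (x + 2) := by
  rw [twr_succ, twr_succ]
  calc twr x ^ twr x ≤ (2 ^ twr x) ^ twr x := Nat.pow_le_pow_left Nat.lt_two_pow_self.le _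
    _ = 2 ^ (twr x * twr x) := by rw [pow_mul]
    _ ≤ _ := Nat.pow_le_pow_right (by norm_num) (sq_le_two_pow hx)

lemma twr_growth {x : ℕ} (hx : 5 ≤ twr x) :
    twr x * 4 ^ (twr x ^ twr x + 1) ≤ twr (x + 4) := by
  have h1 := twr_pow_self (x := x) (by omega)
  have h2 : twr x < twr (x + 2) := twr_strictMono (by omega)
  rw [twr_succ (x + 3), twr_succ (x + 2)]
  set Y := twr (x + 2) with hY
  calc twr x * 4 ^ (twr x ^ twr x + 1) ≤ 2 ^ Y * 4 ^ (Y + 1) := by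
        gcongr
        · exact h2.le.trans Nat.lt_two_pow_self.le
        · norm_num
    _ = 2 ^ (Y + 2 * (Y + 1)) := by
        rw [show (4 : ℕ) = 2 ^ 2 by norm_num, ← pow_mul, ← pow_add]
    _ ≤ 2 ^ 2 ^ Y := by
        refine Nat.pow_le_pow_right (by norm_num) (le_trans ?_ (sq_le_two_pow (by omega)))
        nlinarith

/-! ### The entropy increment argument -/

section Main

variable {α Ω : Type} [Fintype Ω]

/-- Iterating `step` from the trivial partition must stop, since the entropy, starting from
`d log d`, stays nonpositive. Hence there are many homomorphisms. -/
lemma homs_lower [Fintype α] [Nonempty Ω] (G : SimpleGraph Ω)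
    (E : Finset (α × α)) (hE : ∀ e ∈ E, e.1 ≠ e.2 ∧ (e.2, e.1) ∉ E) (hm : 0 < #E)
    {d : ℝ} (hd0 : 0 < d) (hd : ∑ z, ind G z = d * (Fintype.card Ω : ℝ) ^ 2)
    (hG : ∀ G' ≤ G, Free E G' → ∑ z, ind G z ≤ 2 * #E * ∑ z, (ind G z - ind G' z))
    {k x : ℕ} (hk : - Real.log d ≤ k) (hdx : 1 ≤ d * twr x)
    (hx : 64 * #E + 16 + 3 * Fintype.card α ≤ twr x) :
    (Fintype.card Ω : ℝ) ^ Fintype.card α / twr (x + 4 * (64 * #E ^ 2 * k + 1) + 2)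
      ≤ ∑ y : α → Ω, ∏ e ∈ E, ind G (y e.1, y e.2) := by
  by_contra! hcon
  set n : ℝ := (Fintype.card Ω : ℝ) with hndef
  have hn : 0 < n := by rw [hndef]; exact_mod_cast Fintype.card_pos
  have hm1 : (1 : ℝ) ≤ #E := by exact_mod_cast hm
  have key : ∀ j ≤ 64 * #E ^ 2 * k + 1, ∃ (ι : Type) (_ : Fintype ι) (P : Ω → ι),
      Fintype.card ι ≤ twr (x + 4 * j) ∧
      d * Real.log d * n ^ 2 + j * (d * n ^ 2 / (64 * (#E : ℝ) ^ 2))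
        ≤ ∑ z, cexp (sqp P) (ind G) z * Real.log (cexp (sqp P) (ind G) z) := by
    intro j
    induction j with
    | zero =>
      intro _
      refine ⟨Unit, inferInstance, fun _ => (), ?_, ?_⟩
      · simp only [Fintype.card_unit]
        have := lt_twr (x + 4 * 0)
        omega
      · have := entropy_lower (p := sqp fun _ : Ω => ()) (ind_nonneg G) hd0
          (by rw [hd, Fintype.card_prod, Nat.cast_mul, pow_two])
        rw [Fintype.card_prod, Nat.cast_mul, ← hndef, ← pow_two] at this
        simpa using this
    | succ j ih =>
      intro hj
      obtain ⟨ι, _, P, hP, hent⟩ := ih (by omega)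
      set X := x + 4 * j with hX
      have hXx : twr x ≤ twr X := twr_strictMono.monotone (by omega)
      have hXr : (twr x : ℝ) ≤ twr X := by exact_mod_cast hXx
      have hXpos : (0 : ℝ) < twr X := by
        have := lt_twr X
        exact_mod_cast (by omega : 0 < twr X)
      have hpow : twr X ^ (3 * #E + 3 * Fintype.card α + 1)
          ≤ twr (x + 4 * (64 * #E ^ 2 * k + 1) + 2) :=
        calc _ ≤ twr X ^ twr X := Nat.pow_le_pow_right (by omega) (by omega)
          _ ≤ twr (X + 2) := twr_pow_self (by omega)
          _ ≤ _ := twr_strictMono.monotone (by omega)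
      obtain ⟨ι', hι', Q, hQ, hent'⟩ := step G E hE hm (T := twr X) hd (by nlinarith) (by omega)
        hG P hP (lt_of_lt_of_le hcon (by
          apply div_le_div_of_nonneg_left (by positivity) (by positivity)
          exact_mod_cast hpow))
      refine ⟨ι', hι', Q, ?_, ?_⟩
      · calc _ ≤ twr X * 4 ^ (twr X ^ twr X + 1) := by
              refine hQ.trans ?_
              gcongr
              · norm_num
              · omega
              · omega
          _ ≤ twr (X + 4) := twr_growth (by omega)
          _ = _ := by rw [hX]; congr 1
      · push_cast
        rw [add_mul, one_mul]
        linarith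
  obtain ⟨ι, _, P, -, hent⟩ := key _ le_rfl
  have hup := hent.trans (entropy_upper (p := sqp P) (ind_nonneg G) (ind_le_one G))
  have h1 : d * Real.log d * n ^ 2
      + ((64 * #E ^ 2 * k + 1 : ℕ) : ℝ) * (d * n ^ 2 / (64 * (#E : ℝ) ^ 2))
      = d * n ^ 2 * (Real.log d + k + 1 / (64 * (#E : ℝ) ^ 2)) := by
    push_cast
    field_simp
    ring
  rw [h1] at hup
  have h2 : 0 < Real.log d + k + 1 / (64 * (#E : ℝ) ^ 2) := by
    have : 0 < 1 / (64 * (#E : ℝ) ^ 2) := by positivity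
    linarith
  have : 0 < d * n ^ 2 * (Real.log d + k + 1 / (64 * (#E : ℝ) ^ 2)) := by positivity
  linarith

/-- Every graph `G` has a subgraph `G₀` whose deletion makes it free of copies, and for which
a constant proportion of the edges has to be deleted to destroy all copies. (The union of a maximal
family of edge-disjoint copies has this property; here `G₀` is taken maximal with the property.) -/
lemma exists_core (G : SimpleGraph Ω) (E : Finset (α × α)) (hE : ∀ e ∈ E, e.1 ≠ e.2)
    (hm : 0 < #E) :
    ∃ G₀ ≤ G, (∀ G' ≤ G₀, Free E G' → ∑ z, ind G₀ z ≤ 2 * #E * ∑ z, (ind G₀ z - ind G' z)) ∧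
      Free E (G \ G₀) := by
  let p : SimpleGraph Ω → Prop := fun G₀ => G₀ ≤ G ∧
    ∀ G' ≤ G₀, Free E G' → ∑ z, ind G₀ z ≤ 2 * #E * ∑ z, (ind G₀ z - ind G' z)
  have hbot : p ⊥ := by
    refine ⟨bot_le, fun G' hG' _ => ?_⟩
    rw [le_bot_iff.1 hG']
    simp [ind]
  obtain ⟨G₀, -, hmax⟩ := Finite.exists_le_maximal hbot
  refine ⟨G₀, hmax.prop.1, hmax.prop.2, ?_⟩
  rintro ⟨x, hinj, hx⟩
  let K : SimpleGraph Ω := SimpleGraph.fromRel fun u v => ∃ e ∈ E, u = x e.1 ∧ v = x e.2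
  have hKadj : ∀ u v, K.Adj u v → (G \ G₀).Adj u v := by
    rintro u v ⟨-, ⟨e, he, rfl, rfl⟩ | ⟨e, he, rfl, rfl⟩⟩
    · exact hx e he
    · exact (hx e he).symm
  have hKe : ∀ e ∈ E, K.Adj (x e.1) (x e.2) := fun e he =>
    ⟨fun h => hE e he (hinj h), Or.inl ⟨e, he, rfl, rfl⟩⟩
  have hKcard : ∑ z, ind K z ≤ 2 * #E := by
    have h1 : ∑ z, ind K z = #{z : Ω × Ω | K.Adj z.1 z.2} := by
      simp only [ind, Finset.sum_boole]
      congr!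
    have h2 : ({z : Ω × Ω | K.Adj z.1 z.2} : Finset (Ω × Ω))
        ⊆ E.image (fun e => (x e.1, x e.2)) ∪ E.image (fun e => (x e.2, x e.1)) := by
      rintro ⟨u, v⟩ h
      obtain ⟨-, ⟨e, he, rfl, rfl⟩ | ⟨e, he, rfl, rfl⟩⟩ := (Finset.mem_filter.1 h).2
      · exact Finset.mem_union_left _ (Finset.mem_image_of_mem (fun e => (x e.1, x e.2)) he)
      · exact Finset.mem_union_right _ (Finset.mem_image_of_mem (fun e => (x e.2, x e.1)) he)
    have h3 := (Finset.card_le_card h2).trans (Finset.card_union_le _ _)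
    have h4 := h3.trans (Nat.add_le_add Finset.card_image_le Finset.card_image_le)
    rw [h1]
    exact_mod_cast h4.trans_eq (by ring)
  have hp : p (G₀ ⊔ K) := by
    refine ⟨sup_le hmax.prop.1 fun u v h => (hKadj u v h).1, fun G' hG' hfree => ?_⟩
    have h1 := hmax.prop.2 (G' ⊓ G₀) inf_le_right fun ⟨y, hy, hy'⟩ =>
      hfree ⟨y, hy, fun e he => (hy' e he).1⟩
    have h2 : ∑ z, ind (G₀ ⊔ K) z ≤ ∑ z, ind G₀ z + ∑ z, ind K z := by
      rw [← Finset.sum_add_distrib]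
      refine Finset.sum_le_sum fun z _ => ?_
      have h0 := ind_nonneg G₀ z
      have h0' := ind_nonneg K z
      unfold ind at *
      simp only [SimpleGraph.sup_adj]
      split_ifs at * <;> first | linarith | tauto
    -- the copy `x` loses an edge `e` in `G'`
    obtain ⟨e, he, hne⟩ : ∃ e ∈ E, ¬ G'.Adj (x e.1) (x e.2) := by
      by_contra! h
      exact hfree ⟨x, hinj, h⟩
    have hpt : ∀ z, ind G₀ z - ind (G' ⊓ G₀) z + (if z = (x e.1, x e.2) then 1 else 0)
        ≤ ind (G₀ ⊔ K) z - ind G' z := by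
      intro z
      by_cases hz : z = (x e.1, x e.2)
      · have a1 : ¬ G₀.Adj (x e.1) (x e.2) := (hx e he).2
        have a2 := hKe e he
        simp [hz, ind, a1, a2, hne]
      · have a1 : G'.Adj z.1 z.2 → G₀.Adj z.1 z.2 ∨ K.Adj z.1 z.2 := fun h => hG' h
        simp only [hz, if_false, add_zero, ind, SimpleGraph.inf_adj, SimpleGraph.sup_adj]
        split_ifs <;> first | (exfalso; tauto) | norm_num
    have h3 := Finset.sum_le_sum fun z (_ : z ∈ Finset.univ) => hpt z
    rw [Finset.sum_add_distrib, Finset.sum_ite_eq' Finset.univ, if_pos (Finset.mem_univ _)] at h3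
    have hm1 : (1 : ℝ) ≤ #E := by exact_mod_cast hm
    nlinarith
  have hle := hmax.le_of_ge hp le_sup_left
  obtain ⟨e, he⟩ := Finset.card_pos.1 hm
  exact (hx e he).2 (hle (Or.inr (hKe e he)))

/-- Passing from homomorphisms to injective ones. For small `n` a single copy suffices. -/
lemma copies_lower {n N M y : ℕ} (h : ℕ) (hn : 0 < n) (hN : 0 < N)
    (hM : (M : ℝ) * n ≤ (h : ℝ) ^ 2 * (n : ℝ) ^ h)
    (hhom : (n : ℝ) ^ h / twr y ≤ N + M) (hy : 2 * h ^ 2 + h + 4 ≤ twr y) :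
    (n : ℝ) ^ h / twr (y + 4) ≤ N := by
  have hY : 0 < twr y := by omega
  have hYr : (0 : ℝ) < twr y := by exact_mod_cast hY
  have hnr : (0 : ℝ) < n := by exact_mod_cast hn
  have hY4 : (0 : ℝ) < twr (y + 4) := by
    exact_mod_cast hY.trans (twr_strictMono (show y < y + 4 by omega))
  have h1 : twr y ^ twr y ≤ twr (y + 2) := twr_pow_self (by omega)
  have hyy : twr y < twr (y + 2) := twr_strictMono (by omega)
  have h2 : twr (y + 2) ^ twr (y + 2) ≤ twr (y + 4) := twr_pow_self (by omega)
  have h3 : twr (y + 2) ^ 2 ≤ twr (y + 4) :=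
    (Nat.pow_le_pow_right (by omega) (by omega)).trans h2
  rcases le_or_gt (2 * h ^ 2 * twr y) n with hbig | hsmall
  · have hbig' : 2 * (h : ℝ) ^ 2 * twr y ≤ n := by exact_mod_cast hbig
    have hM2 : (M : ℝ) ≤ (n : ℝ) ^ h / (2 * twr y) := by
      rw [le_div_iff₀ (by positivity)]
      refine le_of_mul_le_mul_right ?_ hnr
      calc (M : ℝ) * (2 * twr y) * n = M * n * (2 * twr y) := by ring
        _ ≤ (h : ℝ) ^ 2 * (n : ℝ) ^ h * (2 * twr y) := by gcongr
        _ = (n : ℝ) ^ h * (2 * (h : ℝ) ^ 2 * twr y) := by ring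
        _ ≤ _ := by gcongr
    have h4 : (n : ℝ) ^ h / twr y = 2 * ((n : ℝ) ^ h / (2 * twr y)) := by field_simp
    have h5 : (2 * twr y : ℝ) ≤ twr (y + 4) := by
      have : 2 * twr y ≤ twr (y + 4) := by nlinarith
      exact_mod_cast this
    calc (n : ℝ) ^ h / twr (y + 4) ≤ (n : ℝ) ^ h / (2 * twr y) :=
          div_le_div_of_nonneg_left (by positivity) (by positivity) h5
      _ ≤ N := by linarith
  · have h4 : n ^ h ≤ twr (y + 4) :=
      calc n ^ h ≤ (twr y * twr y) ^ h := by
            refine Nat.pow_le_pow_left (hsmall.le.trans ?_) _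
            exact Nat.mul_le_mul_right _ (by omega)
        _ ≤ (twr y * twr y) ^ twr y := Nat.pow_le_pow_right (by positivity) (by omega)
        _ = (twr y ^ twr y) ^ 2 := by ring
        _ ≤ twr (y + 2) ^ 2 := Nat.pow_le_pow_left h1 _
        _ ≤ _ := h3
    have h5 : (1 : ℝ) ≤ N := by exact_mod_cast hN
    refine le_trans ?_ h5
    rw [div_le_one hY4]
    exact_mod_cast h4

lemma sum_prod_ind [Fintype α] (G : SimpleGraph Ω) (E : Finset (α × α)) :
    ∑ y : α → Ω, ∏ e ∈ E, ind G (y e.1, y e.2)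
      = #{y : α → Ω | ∀ e ∈ E, G.Adj (y e.1) (y e.2)} := by
  rw [Finset.card_filter, Nat.cast_sum]
  refine Finset.sum_congr rfl fun y _ => ?_
  simp only [ind, Finset.prod_boole]
  split_ifs <;> simp

/-- The edges lost when passing from `G` to `G'` are at most as many as the lost ordered pairs. -/
lemma ncard_le_sum_ind (G G' : SimpleGraph Ω) (h : G' ≤ G) :
    ((G.edgeSet \ G'.edgeSet).ncard : ℝ) ≤ ∑ z, (ind G z - ind G' z) := by
  have h1 : ∑ z, (ind G z - ind G' z) = #{z : Ω × Ω | G.Adj z.1 z.2 ∧ ¬ G'.Adj z.1 z.2} := by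
    rw [← Finset.sum_boole]
    refine Finset.sum_congr rfl fun z _ => ?_
    have := @h z.1 z.2
    unfold ind
    split_ifs <;> first | (exfalso; tauto) | norm_num
  rw [h1]
  have h2 : G.edgeSet \ G'.edgeSet ⊆ (({z : Ω × Ω | G.Adj z.1 z.2 ∧ ¬ G'.Adj z.1 z.2} :
      Finset (Ω × Ω)).image fun z => s(z.1, z.2) : Finset (Sym2 Ω)) := by
    intro e
    induction e using Sym2.ind with
    | _ u v =>
      intro he
      simp only [Set.mem_sdiff, SimpleGraph.mem_edgeSet] at he
      rw [Finset.mem_coe, Finset.mem_image]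
      exact ⟨(u, v), by simpa using he, rfl⟩
  have h3 := Set.ncard_le_ncard h2 (Finset.finite_toSet _)
  rw [Set.ncard_coe_finset] at h3
  exact_mod_cast h3.trans Finset.card_image_le

end Main

set_option maxHeartbeats 1000000 in
/-- **Graph removal lemma with tower-of-log bounds.**
For every graph `H` on `h` vertices there is `C = C(H)` such that for every `ε ∈ (0,1)` and
every `n`-vertex graph `G`: if `G` cannot be made `H`-free by deleting fewer than `εn²` edges,
then `G` contains at least `n^h / twr(C·⌈log₂(1/ε)⌉)` copies of `H`. -/
theorem removal_lemma (α : Type) [Fintype α] (H : SimpleGraph α) :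
    ∃ C : ℕ, 0 < C ∧
      ∀ ε : ℝ, ε ∈ Set.Ioo (0 : ℝ) 1 →
      ∀ (n : ℕ) (G : SimpleGraph (Fin n)),
        (∀ G' : SimpleGraph (Fin n), G' ≤ G → copyCount H G' = 0 →
          ε * (n : ℝ) ^ 2 ≤ ((G.edgeSet \ G'.edgeSet).ncard : ℝ)) →
        (n : ℝ) ^ (Fintype.card α) / twr (C * ⌈Real.logb 2 (1 / ε)⌉₊) ≤ copyCount H G := by
  -- each edge of `H` once, oriented along an arbitrary linear order
  let r := Fintype.equivFin α
  let E : Finset (α × α) := {e | H.Adj e.1 e.2 ∧ r e.1 < r e.2}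
  have hE : ∀ e ∈ E, e.1 ≠ e.2 ∧ (e.2, e.1) ∉ E := by
    intro e he
    have he := (Finset.mem_filter.1 he).2
    exact ⟨he.1.ne, fun h => lt_asymm he.2 (Finset.mem_filter.1 h).2.2⟩
  have hEH : ∀ {Ω : Type} (G : SimpleGraph Ω) (x : α → Ω),
      (∀ ⦃a b : α⦄, H.Adj a b → G.Adj (x a) (x b)) ↔ ∀ e ∈ E, G.Adj (x e.1) (x e.2) := by
    intro Ω G x
    refine ⟨fun h e he => h (Finset.mem_filter.1 he).2.1, fun h a b hab => ?_⟩
    rcases lt_or_gt_of_ne (r.injective.ne hab.ne) with hlt | hlt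
    · exact h (a, b) (by simp [E, hab, hlt])
    · exact (h (b, a) (by simp [E, hab.symm, hlt])).symm
  have hcopy : ∀ {Ω : Type} [Fintype Ω] (G : SimpleGraph Ω), copyCount H G
      = #{x : α → Ω | Function.Injective x ∧ ∀ e ∈ E, G.Adj (x e.1) (x e.2)} := by
    intro Ω _ G
    rw [copyCount, Nat.card_eq_fintype_card, Fintype.card_subtype]
    simp only [hEH]
  have hfree : ∀ {Ω : Type} [Fintype Ω] (G : SimpleGraph Ω), Free E G ↔ copyCount H G = 0 := by
    intro Ω _ G
    rw [hcopy, Finset.card_eq_zero, Finset.filter_eq_empty_iff, Free, not_exists]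
    simp
  set h := Fintype.card α with hh
  let a : ℕ := 64 * #E + 16 + 3 * h + 2 * h ^ 2
  refine ⟨a + 256 * #E ^ 2 + 10, by omega, fun ε hε n G hG => ?_⟩
  obtain ⟨hε0, hε1⟩ := hε
  set k := ⌈Real.logb 2 (1 / ε)⌉₊ with hk
  have hlogpos : 0 < Real.logb 2 (1 / ε) :=
    Real.logb_pos (by norm_num) (by rw [lt_div_iff₀ hε0]; linarith)
  have hk1 : 1 ≤ k := Nat.one_le_iff_ne_zero.2 (Nat.ceil_pos.2 hlogpos).ne'
  have hlogk : Real.logb 2 (1 / ε) ≤ k := Nat.le_ceil _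
  have hε2k : 1 / ε ≤ 2 ^ k := by
    have := (Real.logb_le_iff_le_rpow (by norm_num) (by positivity)).1 hlogk
    simpa using this
  have hlnε : - Real.log ε ≤ k := by
    have h1 : Real.logb 2 (1 / ε) * Real.log 2 = - Real.log ε := by
      rw [Real.logb, div_mul_cancel₀ _ (Real.log_pos one_lt_two).ne', one_div, Real.log_inv]
    have h2 := Real.log_two_lt_d9
    have h3 := Real.log_two_gt_d9
    nlinarith
  -- the height `a k` at which the iteration starts
  have hak : a * 1 ≤ a * k := Nat.mul_le_mul_left _ hk1
  have hax : a < twr (a * k) := lt_of_le_of_lt (by omega) (lt_twr (a * k))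
  have h2k : 2 ^ k ≤ twr (a * k) := by
    calc 2 ^ k ≤ 2 ^ twr k := Nat.pow_le_pow_right (by norm_num) (lt_twr k).le
      _ = twr (k + 1) := rfl
      _ ≤ _ := twr_strictMono.monotone (by
        have : 2 * k ≤ a * k := Nat.mul_le_mul_right _ (by omega)
        omega)
  rcases Nat.eq_zero_or_pos n with rfl | hn
  · rcases Nat.eq_zero_or_pos h with h0 | h0
    · -- the empty map is a copy of the empty graph
      have : IsEmpty α := Fintype.card_eq_zero_iff.1 (by omega)
      have hc : copyCount H G ≠ 0 := by
        rw [Ne, ← hfree G]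
        intro hf
        exact hf ⟨isEmptyElim, fun x => isEmptyElim x, fun e => isEmptyElim e.1⟩
      have hc1 : (1 : ℝ) ≤ copyCount H G := by exact_mod_cast Nat.one_le_iff_ne_zero.2 hc
      refine le_trans ?_ hc1
      rw [h0, pow_zero]
      have : 0 < twr ((a + 256 * #E ^ 2 + 10) * k) := by
        have := lt_twr ((a + 256 * #E ^ 2 + 10) * k); omega
      rw [div_le_one (by exact_mod_cast this)]
      exact_mod_cast this
    · rw [Nat.cast_zero, zero_pow h0.ne', zero_div]
      positivity
  have hnr : (0 : ℝ) < n := by exact_mod_cast hn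
  have : Nonempty (Fin n) := ⟨⟨0, hn⟩⟩
  have hcpos : 0 < copyCount H G := by
    rw [Nat.pos_iff_ne_zero]
    intro h0
    have := hG G le_rfl h0
    rw [Set.sdiff_self, Set.ncard_empty, Nat.cast_zero] at this
    have : 0 < ε * (n : ℝ) ^ 2 := by positivity
    linarith
  set y := a * k + 4 * (64 * #E ^ 2 * k + 1) + 2 with hy
  have hyak : twr (a * k) ≤ twr y := twr_strictMono.monotone (by omega)
  have hhom : (n : ℝ) ^ h / twr y ≤ #{x : α → Fin n | ∀ e ∈ E, G.Adj (x e.1) (x e.2)} := by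
    rcases Nat.eq_zero_or_pos #E with hm | hm
    · rw [Finset.card_eq_zero.1 hm]
      simp only [Finset.notMem_empty, false_imp_iff, implies_true, Finset.filter_true,
        Finset.card_univ, Fintype.card_fun, Fintype.card_fin, Nat.cast_pow]
      apply div_le_self (by positivity)
      exact_mod_cast (by omega : 1 ≤ twr y)
    obtain ⟨G₀, hG₀, hcore, hrest⟩ := exists_core G E (fun e he => (hE e he).1) hm
    have hedges : ε * (n : ℝ) ^ 2 ≤ ∑ z, ind G₀ z := by
      have h1 := (hG (G \ G₀) sdiff_le ((hfree _).1 hrest)).trans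
        (ncard_le_sum_ind G (G \ G₀) sdiff_le)
      refine h1.trans (Finset.sum_le_sum fun z _ => ?_)
      by_cases h2 : G.Adj z.1 z.2 <;> by_cases h3 : G₀.Adj z.1 z.2 <;> simp [ind, h2, h3]
    have hd : ∑ z, ind G₀ z = (∑ z, ind G₀ z) / (n : ℝ) ^ 2 * (Fintype.card (Fin n) : ℝ) ^ 2 := by
      rw [Fintype.card_fin]; field_simp
    set d := (∑ z, ind G₀ z) / (n : ℝ) ^ 2 with hddef
    have hεd : ε ≤ d := by rw [hddef, le_div_iff₀ (by positivity)]; exact hedges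
    have hlog : - Real.log d ≤ k := by
      have := Real.log_le_log hε0 hεd
      linarith
    have hdx : 1 ≤ d * twr (a * k) := by
      rw [div_le_iff₀ hε0] at hε2k
      have h2 : (2 : ℝ) ^ k ≤ twr (a * k) := by exact_mod_cast h2k
      have h3 : (0 : ℝ) ≤ twr (a * k) := by positivity
      nlinarith
    have hmain := homs_lower G₀ E hE hm (hε0.trans_le hεd) hd hcore hlog hdx (by omega)
    rw [Fintype.card_fin, ← hh, ← hy, sum_prod_ind] at hmain
    refine hmain.trans ?_
    have hsub : ({x : α → Fin n | ∀ e ∈ E, G₀.Adj (x e.1) (x e.2)} : Finset (α → Fin n))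
        ⊆ ({x : α → Fin n | ∀ e ∈ E, G.Adj (x e.1) (x e.2)} : Finset (α → Fin n)) :=
      Finset.monotone_filter_right _ fun x _ hx e he => hG₀ (hx e he)
    exact_mod_cast Finset.card_le_card hsub
  have hni : (#{x : α → Fin n | ¬ Function.Injective x} : ℝ) * n ≤ (h : ℝ) ^ 2 * (n : ℝ) ^ h := by
    have h1 := noninjective_card (α := α) (Ω := Fin n)
    rw [Fintype.card_fin, ← hh] at h1
    convert h1
  have hsplit : #{x : α → Fin n | ∀ e ∈ E, G.Adj (x e.1) (x e.2)}
      ≤ copyCount H G + #{x : α → Fin n | ¬ Function.Injective x} := by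
    rw [hcopy]
    refine le_trans (Finset.card_le_card fun x hx => ?_) (Finset.card_union_le _ _)
    simp only [Finset.mem_union, Finset.mem_filter, Finset.mem_univ, true_and] at hx ⊢
    tauto
  have hfin := copies_lower h hn hcpos hni (hhom.trans (by exact_mod_cast hsplit)) (by omega)
  refine le_trans ?_ hfin
  apply div_le_div_of_nonneg_left (by positivity)
  · have := lt_twr (y + 4)
    exact_mod_cast (by omega : 0 < twr (y + 4))
  · have h1 : y + 4 ≤ (a + 256 * #E ^ 2 + 10) * k := by
      rw [hy]; nlinarith
    exact_mod_cast twr_strictMono.monotone h1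
end
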